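/- arXiv:2509.00302 — 2 statements merged into one kernel-verified Lean document; each statement's English description precedes it below -/
import Mathlib

section
/- Let Q be a prime power with Q ≠ 5 and Q ≡ 5, 15, 21, or 23 (mod 24), let s be an odd positive integer, and let q = Q^{2s}. Then for all integers t, m with 1 ≤ t < m ≤ 2⌈(q + 4Q^{s} − 25)/12⌉ − 1, there exists an optimal (4, 3)-LRC over F_q with parameters [6m, 4t + 1, 6(m−t)]_q. -/
/-- The Hamming weight of a vector: the number of nonzero coordinates. -/
def hammingWt {F : Type*} [Zero F] [DecidableEq F] {n : ℕ} (v : Fin n → F) : ℕ :=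
  (Finset.univ.filter (fun i => v i ≠ 0)).card

/-- The minimum distance of the linear code `C` is at least `d`. -/
def MinDistGe {F : Type*} [Field F] [DecidableEq F] {n : ℕ}
    (C : Submodule F (Fin n → F)) (d : ℕ) : Prop :=
  ∀ c ∈ C, c ≠ 0 → d ≤ hammingWt c

/-- The minimum distance of the linear code `C` is exactly `d`. -/
def MinDistEq {F : Type*} [Field F] [DecidableEq F] {n : ℕ}
    (C : Submodule F (Fin n → F)) (d : ℕ) : Prop :=
  MinDistGe C d ∧ ∃ c ∈ C, c ≠ 0 ∧ hammingWt c = d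

/-- `C` is an `(r, δ)`-locally repairable code: every coordinate `i` has a repair
group `R` containing `i`, of size at most `r + δ - 1`, such that the punctured code
`C|_R` has minimum distance at least `δ` (i.e. every codeword whose restriction to
`R` is nonzero has at least `δ` nonzero coordinates inside `R`). -/
def IsLRC {F : Type*} [Field F] [DecidableEq F] {n : ℕ}
    (C : Submodule F (Fin n → F)) (r δ : ℕ) : Prop :=
  ∀ i : Fin n, ∃ R : Finset (Fin n), i ∈ R ∧ R.card ≤ r + δ - 1 ∧
    ∀ c ∈ C, (∃ j ∈ R, c j ≠ 0) → δ ≤ (R.filter (fun j => c j ≠ 0)).card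

/-- The parameters `[n, k, d]` attain the Singleton-type bound for `(r, δ)`-LRCs:
`d = n - k + 1 - (⌈k/r⌉ - 1)(δ - 1)`  (here `⌈k/r⌉ = (k + r - 1)/r`). -/
def SingletonOptimal (n k d r δ : ℕ) : Prop :=
  (d : ℤ) = (n : ℤ) - (k : ℤ) + 1 - ((((k + r - 1) / r : ℕ) : ℤ) - 1) * ((δ : ℤ) - 1)

/-- There exists an optimal `(r, δ)`-LRC over `F` with parameters `[n, k, d]`. -/
def ExistsOptimalLRC (F : Type*) [Field F] [DecidableEq F] (n k d r δ : ℕ) : Prop :=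
  ∃ C : Submodule F (Fin n → F),
    Module.finrank F C = k ∧ MinDistEq C d ∧ IsLRC C r δ ∧ SingletonOptimal n k d r δ

/-!
Let `P = Q ^ s`, so that `F` has `P ^ 2` elements and `P` is `5` or `7` modulo `8`. Jacobi sums of a
character of order eight show that `y ^ 2 = x ^ 5 - x` attains the Hasse–Weil bound over `F`. Its
branch points are the vertices of an octahedron; moving a three-fold axis of that octahedron to
`0, ∞` turns the curve into `y ^ 2 = c * (X ^ 6 + 5 * √-2 * X ^ 3 + 1)`, on which the function
`y / (X ^ 3 + 1)` of degree `6` is invariant under a symmetric group `S₃`. Its fibres at rational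
points are therefore mostly either empty or made of six rational points, so the point count
yields many complete fibres. These are the repair groups: the codewords are the values of
`∑ k < t, p k * α ^ k + c * α ^ t * (X ^ 3 + 1)`, where `α = y / (X ^ 3 + 1)` and each `p k` has
degree at most `3`. On a group this agrees with a polynomial of degree at most `3` in `X`, and its
zeros on the whole curve are counted through its norm down to `F(X)`.
-/

open Polynomial

lemma card_filter_mem_of_card_fiber_eq {ι κ : Type*} [Fintype ι] [DecidableEq κ] {π : ι → κ}
    {n : ℕ} {B : Finset κ} (hfib : ∀ b ∈ B, (Finset.univ.filter fun i ↦ π i = b).card = n) :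
    (Finset.univ.filter fun i ↦ π i ∈ B).card = n * B.card := by
  rw [Finset.card_eq_sum_card_fiberwise (f := π) (t := B) fun i hi ↦ by simpa using hi, mul_comm]
  refine Finset.sum_const_nat fun b hb ↦ ?_
  rw [← hfib b hb, Finset.filter_filter]
  congr 1
  grind

section CharacterSums

variable {F : Type*} [Field F]

lemma mulChar_eq_of_sq_eq_one [Finite F] {R : Type*} [CommRing R] [IsDomain R] {χ φ : MulChar F R}
    (hχ : χ ^ 2 = 1) (hχ1 : χ ≠ 1) (hφ : φ ^ 2 = 1) (hφ1 : φ ≠ 1) : χ = φ := by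
  obtain ⟨g, hg⟩ := IsCyclic.exists_generator (α := Fˣ)
  have apply_generator {θ : MulChar F R} (hθ : θ ^ 2 = 1) (hθ1 : θ ≠ 1) : θ g = -1 := by
    have hsq : θ g ^ 2 = 1 := by rw [← MulChar.pow_apply_coe, hθ, MulChar.one_apply_coe]
    refine (sq_eq_one_iff.1 hsq).resolve_left fun h ↦ hθ1 ?_
    rw [MulChar.eq_iff hg, h, MulChar.one_apply_coe]
  rw [MulChar.eq_iff hg, apply_generator hχ hχ1, apply_generator hφ hφ1]

variable [Fintype F]

lemma jacobiSum_pow_of_dvd_card {R : Type*} [CommRing R] {P : ℕ} (hP : P ∣ Fintype.card F)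
    (χ φ : MulChar F R) : jacobiSum (χ ^ P) (φ ^ P) = jacobiSum χ φ := by
  obtain ⟨p, _⟩ := CharP.exists F
  obtain ⟨n, hp, hcard⟩ := FiniteField.card F p
  have : Fact p.Prime := ⟨hp⟩
  obtain ⟨e, -, rfl⟩ := (Nat.dvd_prime_pow hp).1 (hcard ▸ hP)
  have hpe : p ^ e ≠ 0 := pow_ne_zero _ hp.ne_zero
  refine Fintype.sum_bijective _ (iterateFrobeniusEquiv F p e).bijective _ _ fun x ↦ ?_
  rw [iterateFrobeniusEquiv_apply, iterateFrobenius_def, MulChar.pow_apply' _ hpe,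
    MulChar.pow_apply' _ hpe, ← map_pow, ← map_pow, sub_pow_char_pow, one_pow]

lemma jacobiSum_mul_jacobiSum_of_isQuadratic {χ φ : MulChar F ℂ} (hφ : φ.IsQuadratic)
    (hφ1 : φ ≠ 1) (hχ1 : χ ≠ 1) (hχφ : χ * φ ≠ 1) :
    jacobiSum χ φ * jacobiSum (χ * φ) φ = φ (-1) * Fintype.card F := by
  let θ := AddChar.FiniteField.primitiveChar_to_Complex F
  have hθ : θ.IsPrimitive := AddChar.FiniteField.primitiveChar_to_Complex_isPrimitive F
  have gauss_ne_zero {η : MulChar F ℂ} (hη : η ≠ 1) : gaussSum η θ ≠ 0 :=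
    gaussSum_ne_zero_of_nontrivial (Nat.cast_ne_zero.2 Fintype.card_ne_zero) hη hθ
  have hχφφ : χ * φ * φ = χ := by rw [mul_assoc, ← sq, hφ.sq_eq_one, mul_one]
  have h₁ := jacobiSum_mul_nontrivial hχφ θ
  have h₂ := jacobiSum_mul_nontrivial (χ := χ * φ) (φ := φ) (by rwa [hχφφ]) θ
  rw [hχφφ] at h₂
  rw [← gaussSum_sq hφ1 hφ hθ]
  refine mul_left_cancel₀ (mul_ne_zero (gauss_ne_zero hχ1) (gauss_ne_zero hχφ)) ?_
  linear_combination gaussSum χ θ * jacobiSum (χ * φ) φ * h₁ + gaussSum χ θ * gaussSum φ θ * h₂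

lemma card_filter_sq_eq [DecidableEq F] (hF : ringChar F ≠ 2) (u : F) :
    ((Finset.univ.filter fun x : F ↦ x ^ 2 = u).card : ℤ) = quadraticChar F u + 1 := by
  simpa only [Set.toFinset_ofPred] using quadraticChar_card_sqrts hF u

lemma sum_comp_sq [DecidableEq F] (hF : ringChar F ≠ 2) {R : Type*} [Ring R] (Φ : F → R) :
    ∑ x, Φ (x ^ 2) = ∑ u, Φ u * (1 + (quadraticChar F u : R)) := by
  rw [← Finset.sum_fiberwise _ fun x : F ↦ x ^ 2]
  refine Finset.sum_congr rfl fun u _ ↦ ?_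
  calc ∑ x with x ^ 2 = u, Φ (x ^ 2) = ∑ x with x ^ 2 = u, Φ u :=
        Finset.sum_congr rfl fun x hx ↦ by rw [(Finset.mem_filter.1 hx).2]
    _ = Φ u * (1 + (quadraticChar F u : R)) := by
        rw [Finset.sum_const, nsmul_eq_mul', ← Int.cast_natCast, card_filter_sq_eq hF,
          Int.cast_add, Int.cast_one, add_comm]

lemma card_add_sum_quadraticChar [DecidableEq F] {ι : Type*} [Fintype ι]
    (g : ι → F) :
    Fintype.card ι + ∑ x, quadraticChar F (g x) =
      2 * (Finset.univ.filter fun x ↦ quadraticChar F (g x) = 1).card +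
        (Finset.univ.filter fun x ↦ g x = 0).card := by
  have hpoint (x : ι) : 1 + quadraticChar F (g x) =
      2 * (if quadraticChar F (g x) = 1 then 1 else 0) + (if g x = 0 then 1 else 0) := by
    by_cases h0 : g x = 0
    · simp [h0]
    · rcases quadraticChar_dichotomy h0 with h | h <;> rw [h] <;> simp [h0]
  rw [← Finset.card_univ, Finset.cast_card, ← Finset.sum_add_distrib]
  simp only [hpoint, Finset.sum_add_distrib, ← Finset.mul_sum, Finset.sum_boole]

section OrderEight

variable {ψ : MulChar F ℂ} (hψ : orderOf ψ = 8)

include hψ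

omit [Fintype F] in
lemma pow_ne_one_of_orderOf_eq_eight {n : ℕ} (hn : ¬ 8 ∣ n) : ψ ^ n ≠ 1 := by
  rwa [Ne, ← orderOf_dvd_iff_pow_eq_one, hψ]

omit [Fintype F] in
lemma pow_four_isQuadratic : (ψ ^ 4).IsQuadratic := by
  rw [MulChar.isQuadratic_iff_sq_eq_one, ← pow_mul, ← orderOf_dvd_iff_pow_eq_one, hψ]

lemma jacobiSum_mul_jacobiSum_add_four {n : ℕ} (hn : Odd n) :
    jacobiSum (ψ ^ n) (ψ ^ 4) * jacobiSum (ψ ^ (n + 4)) (ψ ^ 4) = Fintype.card F := by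
  have h := jacobiSum_mul_jacobiSum_of_isQuadratic (pow_four_isQuadratic hψ)
    (pow_ne_one_of_orderOf_eq_eight hψ (by lia))
    (pow_ne_one_of_orderOf_eq_eight hψ (n := n) (by grind))
    (by rw [← pow_add]; exact pow_ne_one_of_orderOf_eq_eight hψ (by grind))
  have apply_neg_one : (ψ ^ 4) (-1) = 1 := by
    rw [MulChar.pow_apply' _ four_ne_zero, ← map_pow, Even.neg_one_pow ⟨2, rfl⟩, map_one]
  rwa [apply_neg_one, one_mul, ← pow_add] at h

lemma jacobiSum_mul_jacobiSum_seven_mul {n : ℕ} (hn : Odd n) :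
    jacobiSum (ψ ^ n) (ψ ^ 4) * jacobiSum (ψ ^ (7 * n)) (ψ ^ 4) = Fintype.card F := by
  have pow_inv (k : ℕ) : (ψ ^ k)⁻¹ = ψ ^ (7 * k) := by
    rw [inv_eq_iff_mul_eq_one, ← pow_add, ← orderOf_dvd_iff_pow_eq_one, hψ]
    lia
  have h := jacobiSum_mul_jacobiSum_inv (F' := ℂ)
    (by rw [ringChar.eq_zero]; exact (CharP.ringChar_ne_zero_of_finite F).symm)
    (pow_ne_one_of_orderOf_eq_eight hψ (n := n) (by grind))
    (pow_ne_one_of_orderOf_eq_eight hψ (n := 4) (by lia))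
    (by rw [← pow_add]; exact pow_ne_one_of_orderOf_eq_eight hψ (by grind))
  rwa [pow_inv, (pow_four_isQuadratic hψ).inv] at h

lemma exists_jacobiSum_eq_of_odd {P : ℕ} (hcard : Fintype.card F = P ^ 2)
    (hP : P % 8 = 5 ∨ P % 8 = 7) :
    ∃ j : ℂ, j ^ 2 = Fintype.card F ∧ ∀ n, Odd n → jacobiSum (ψ ^ n) (ψ ^ 4) = j := by
  let J (n : ℕ) : ℂ := jacobiSum (ψ ^ n) (ψ ^ 4)
  have J_mod (n : ℕ) : J n = J (n % 8) := by simp only [J, ← hψ, pow_mod_orderOf]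
  have hcard0 : (Fintype.card F : ℂ) ≠ 0 := Nat.cast_ne_zero.2 Fintype.card_ne_zero
  have J_add_four {n : ℕ} (hn : Odd n) : J ((n + 4) % 8) = J (7 * n % 8) := by
    have hadd := jacobiSum_mul_jacobiSum_add_four hψ hn
    rw [← J_mod, ← J_mod]
    exact mul_left_cancel₀ (left_ne_zero_of_mul (hadd.trans_ne hcard0))
      (hadd.trans (jacobiSum_mul_jacobiSum_seven_mul hψ hn).symm)
  have h57 : J 5 = J 7 := J_add_four (n := 1) (by decide)
  have h13 : J 1 = J 3 := J_add_four (n := 5) (by decide)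
  have h15 : J 1 = J 5 := by
    have hfrob := jacobiSum_pow_of_dvd_card (hcard ▸ dvd_pow_self P two_ne_zero) ψ (ψ ^ 4)
    rw [(pow_four_isQuadratic hψ).pow_odd (by grind)] at hfrob
    have hJP : J 1 = J P := by simp only [J, hfrob, pow_one]
    rw [hJP, J_mod]
    rcases hP with h | h <;> simp only [h, h57]
  refine ⟨J 1, ?_, fun n hn ↦ ?_⟩
  · rw [← jacobiSum_mul_jacobiSum_add_four hψ odd_one, sq]
    exact congrArg (J 1 * ·) h15
  · have hn8 : n % 8 = 1 ∨ n % 8 = 3 ∨ n % 8 = 5 ∨ n % 8 = 7 := by grind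
    change J n = J 1
    rw [J_mod]
    rcases hn8 with h | h | h | h <;> simp only [h, ← h13, ← h57, ← h15]

lemma sum_quadraticChar_pow_five_sub [DecidableEq F] (hF : ringChar F ≠ 2) :
    ((∑ x : F, quadraticChar F (x ^ 5 - x) : ℤ) : ℂ) =
      ∑ k ∈ Finset.range 4, jacobiSum (ψ ^ (2 * k + 1)) (ψ ^ 4) := by
  have hquad (x : F) : (quadraticChar F x : ℂ) = (ψ ^ 4) x := by
    have h : ψ ^ 4 = (quadraticChar F).ringHomComp (Int.castRingHom ℂ) :=
      mulChar_eq_of_sq_eq_one (pow_four_isQuadratic hψ).sq_eq_one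
        (pow_ne_one_of_orderOf_eq_eight hψ (by lia))
        ((quadraticChar_isQuadratic F).comp _).sq_eq_one
        ((MulChar.ringHomComp_ne_one_iff (Int.castRingHom ℂ).injective_int).2
          (quadraticChar_ne_one hF))
    rw [h, MulChar.ringHomComp_apply, Int.coe_castRingHom]
  have pow_apply {n : ℕ} (hn : n ≠ 0) (x : F) : (ψ ^ n) x = ψ x ^ n := MulChar.pow_apply' _ hn x
  let Φ (u : F) : ℂ := ψ u * (ψ ^ 4) (1 - u)
  calc ((∑ x : F, quadraticChar F (x ^ 5 - x) : ℤ) : ℂ)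
      = ∑ x : F, Φ ((x ^ 2) ^ 2) := by
        push_cast
        refine Finset.sum_congr rfl fun x _ ↦ ?_
        have hx : x ^ 5 - x = x * (1 - x ^ 4) * (-1) := by ring
        have h1 : ψ (-1) ^ 4 = 1 := by rw [← map_pow, Even.neg_one_pow ⟨2, rfl⟩, map_one]
        rw [hquad, hx]
        simp only [Φ, pow_apply four_ne_zero, map_mul, mul_pow, h1, mul_one, ← map_pow, ← pow_mul]
    _ = ∑ u : F, Φ (u ^ 2) * (1 + (ψ ^ 2) (u ^ 2)) := by
        rw [sum_comp_sq hF fun u ↦ Φ (u ^ 2)]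
        refine Finset.sum_congr rfl fun u _ ↦ ?_
        rw [hquad, pow_apply two_ne_zero, pow_apply four_ne_zero, map_pow, ← pow_mul]
    _ = ∑ v : F, Φ v * (1 + (ψ ^ 2) v) * (1 + (ψ ^ 4) v) := by
        simp only [sum_comp_sq hF fun v ↦ Φ v * (1 + (ψ ^ 2) v), hquad]
    _ = ∑ k ∈ Finset.range 4, jacobiSum (ψ ^ (2 * k + 1)) (ψ ^ 4) := by
        simp only [jacobiSum]
        rw [Finset.sum_comm]
        refine Finset.sum_congr rfl fun v _ ↦ ?_
        simp only [Finset.sum_range_succ, Finset.sum_range_zero, Φ, pow_apply two_ne_zero,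
          pow_apply four_ne_zero, pow_apply (Nat.succ_ne_zero _)]
        ring

end OrderEight

section Quintic

variable {P : ℕ}

lemma ringChar_ne_two_of_card_eq_sq (hcard : Fintype.card F = P ^ 2) (hP : Odd P) :
    ringChar F ≠ 2 := by
  rw [Ne, FiniteField.even_card_iff_char_two, hcard, ← Nat.even_iff, Nat.not_even_iff_odd]
  exact hP.pow

variable [DecidableEq F]

lemma card_filter_pow_eq_self_le {n : ℕ} (hn : 1 < n) :
    (Finset.univ.filter fun x : F ↦ x ^ n = x).card ≤ n := by
  by_contra! hlt
  refine FiniteField.X_pow_card_sub_X_ne_zero F hn <|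
    eq_zero_of_natDegree_lt_card_of_eval_eq_zero' _ (Finset.univ.filter fun x : F ↦ x ^ n = x)
      (fun x hx ↦ ?_) (by rwa [FiniteField.X_pow_card_sub_X_natDegree_eq F hn])
  simpa [sub_eq_zero] using hx

lemma sq_sum_quadraticChar_pow_five_sub (hcard : Fintype.card F = P ^ 2)
    (hP : P % 8 = 5 ∨ P % 8 = 7) :
    (∑ x : F, quadraticChar F (x ^ 5 - x)) ^ 2 = (4 * P) ^ 2 := by
  have hcard8 : Fintype.card F % 8 = 1 := by
    rw [hcard]
    rcases hP with h | h <;> simp [Nat.pow_mod, h]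
  have hF := ringChar_ne_two_of_card_eq_sq hcard (by grind)
  obtain ⟨ψ, hψ⟩ := MulChar.exists_mulChar_orderOf F (n := 8) (by lia)
    (Complex.isPrimitiveRoot_exp 8 (by lia))
  obtain ⟨j, hj, hJ⟩ := exists_jacobiSum_eq_of_odd hψ hcard hP
  have hsum : ((∑ x : F, quadraticChar F (x ^ 5 - x) : ℤ) : ℂ) = 4 * j := by
    rw [sum_quadraticChar_pow_five_sub hψ hF,
      Finset.sum_congr rfl fun k _ ↦ hJ (2 * k + 1) (odd_two_mul_add_one k)]
    simp
  have hsq : ((∑ x : F, quadraticChar F (x ^ 5 - x) : ℤ) : ℂ) ^ 2 = (4 * P) ^ 2 := by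
    rw [hsum, mul_pow, hj, hcard]
    push_cast
    ring
  exact_mod_cast hsq

lemma exists_card_add_four_mul_le (hcard : Fintype.card F = P ^ 2) (hP : P % 8 = 5 ∨ P % 8 = 7) :
    ∃ ε : F, ε ≠ 0 ∧ Fintype.card F + 4 * P ≤
      2 * (Finset.univ.filter fun x ↦ quadraticChar F (ε * (x ^ 5 - x)) = 1).card + 5 := by
  have hsign : ∃ ε : F, ε ≠ 0 ∧ ∑ x : F, quadraticChar F (ε * (x ^ 5 - x)) = 4 * P := by
    rcases sq_eq_sq_iff_eq_or_eq_neg.1 (sq_sum_quadraticChar_pow_five_sub hcard hP) with h | h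
    · exact ⟨1, one_ne_zero, by simpa only [one_mul]⟩
    · obtain ⟨ε, hε⟩ := quadraticChar_exists_neg_one'
        (ringChar_ne_two_of_card_eq_sq hcard (by grind))
      refine ⟨ε, ε.ne_zero, ?_⟩
      simp only [map_mul, hε]
      rw [← Finset.mul_sum, h, neg_one_mul, neg_neg]
  obtain ⟨ε, hε, hsum⟩ := hsign
  have hcount := card_add_sum_quadraticChar fun x : F ↦ ε * (x ^ 5 - x)
  have hroots := card_filter_pow_eq_self_le (F := F) (n := 5) (by lia)
  simp only [mul_eq_zero, hε, false_or, sub_eq_zero, hsum] at hcount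
  exact ⟨ε, hε, by lia⟩

end Quintic

end CharacterSums

section Rotation

variable {F : Type*} [Field F] [Fintype F]

lemma natCast_ne_zero_of_coprime_card {n : ℕ} (hn : n.Coprime (Fintype.card F)) : (n : F) ≠ 0 := by
  have h := (Nat.isCoprime_iff_coprime.2 hn).map (Int.castRingHom F)
  simp only [map_natCast, FiniteField.cast_card_eq_zero, isCoprime_zero_right] at h
  exact h.ne_zero

lemma two_ne_zero_and_three_ne_zero (hcard : Fintype.card F % 24 = 1) :
    (2 : F) ≠ 0 ∧ (3 : F) ≠ 0 := by
  have h2 : Nat.Coprime 2 (Fintype.card F) := Nat.prime_two.coprime_iff_not_dvd.2 (by lia)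
  have h3 : Nat.Coprime 3 (Fintype.card F) := Nat.prime_three.coprime_iff_not_dvd.2 (by lia)
  exact ⟨mod_cast natCast_ne_zero_of_coprime_card h2, mod_cast natCast_ne_zero_of_coprime_card h3⟩

lemma card_mod_twentyFour_eq_one {P : ℕ} (hcard : Fintype.card F = P ^ 2)
    (hP : P % 8 = 5 ∨ P % 8 = 7) : Fintype.card F % 24 = 1 := by
  have three_pow_mod (k : ℕ) : 3 ^ k % 8 = 1 ∨ 3 ^ k % 8 = 3 := by
    induction k with
    | zero => simp
    | succ k ih => lia
  have h3P : ¬ 3 ∣ P := by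
    intro h3
    obtain ⟨p, _⟩ := CharP.exists F
    obtain ⟨n, hp, hpn⟩ := FiniteField.card F p
    have hPp : P ∣ p ^ (n : ℕ) := hpn ▸ hcard ▸ dvd_pow_self P two_ne_zero
    obtain rfl : 3 = p :=
      (Nat.prime_dvd_prime_iff_eq Nat.prime_three hp).1 (Nat.prime_three.dvd_of_dvd_pow
        (h3.trans hPp))
    obtain ⟨e, -, rfl⟩ := (Nat.dvd_prime_pow Nat.prime_three).1 hPp
    have := three_pow_mod e
    lia
  have hPmod : P % 24 = 5 ∨ P % 24 = 7 ∨ P % 24 = 13 ∨ P % 24 = 23 := by lia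
  rw [hcard, Nat.pow_mod]
  rcases hPmod with h | h | h | h <;> rw [h]

lemma exists_isPrimitiveRoot_of_prime_dvd {p : ℕ} (hp : p.Prime) (hdvd : p ∣ Fintype.card F - 1) :
    ∃ ζ : F, IsPrimitiveRoot ζ p := by
  classical
  have : Fact p.Prime := ⟨hp⟩
  obtain ⟨u, hu⟩ := exists_prime_orderOf_dvd_card p (G := Fˣ) (by rwa [Fintype.card_units])
  exact ⟨u, IsPrimitiveRoot.coe_units_iff.2 (hu ▸ IsPrimitiveRoot.orderOf u)⟩

lemma exists_sq_eq_neg_one_and_sq_eq_three_and_sq_eq_neg_two (hcard : Fintype.card F % 24 = 1) :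
    ∃ i r s : F, i ^ 2 = -1 ∧ r ^ 2 = 3 ∧ s ^ 2 = -2 := by
  obtain ⟨i, hi⟩ := FiniteField.isSquare_neg_one_iff.2 (show Fintype.card F % 4 ≠ 3 by lia)
  obtain ⟨s, hs⟩ := FiniteField.isSquare_neg_two_iff.2
    (show Fintype.card F % 8 ≠ 5 ∧ Fintype.card F % 8 ≠ 7 by lia)
  obtain ⟨ζ, hζ⟩ := exists_isPrimitiveRoot_of_prime_dvd (F := F) Nat.prime_three (by lia)
  have hζ0 : 1 + ζ + ζ ^ 2 = 0 := by
    simpa [Finset.sum_range_succ] using hζ.geom_sum_eq_zero (by lia)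
  refine ⟨i, i * (2 * ζ + 1), s, by rw [hi, sq], ?_, by rw [hs, sq]⟩
  linear_combination -(2 * ζ + 1) ^ 2 * hi - 4 * hζ0

variable [DecidableEq F]

lemma card_filter_quadraticChar_le_of_mobius {a b c d : F} (hdet : a * d - b * c ≠ 0) {n : ℕ}
    {g k : F → F} (hk : ∀ x z, c * z + d ≠ 0 → a * z + b = x * (c * z + d) →
      k z = g x * ((c * z + d) ^ n) ^ 2) :
    (Finset.univ.filter fun x ↦ quadraticChar F (g x) = 1).card ≤
      (Finset.univ.filter fun z ↦ quadraticChar F (k z) = 1).card + 1 := by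
  let μ (z : F) : F := (a * z + b) / (c * z + d)
  have hsub : (Finset.univ.filter fun x ↦ quadraticChar F (g x) = 1) ⊆
      insert (a / c) ((Finset.univ.filter fun z ↦ quadraticChar F (k z) = 1).image μ) := by
    intro x hx
    rw [Finset.mem_insert, Finset.mem_image]
    by_cases hxc : a - x * c = 0
    · have hc : c ≠ 0 := by rintro rfl; apply hdet; linear_combination d * hxc
      exact .inl ((eq_div_iff hc).2 (by linear_combination -hxc))
    · obtain ⟨z, hz⟩ : ∃ z, z * (a - x * c) = x * d - b := ⟨_, div_mul_cancel₀ _ hxc⟩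
      have hden : c * z + d ≠ 0 := by
        refine right_ne_zero_of_mul (a := a - x * c) ?_
        convert hdet using 1
        linear_combination c * hz
      have hnum : a * z + b = x * (c * z + d) := by linear_combination hz
      refine .inr ⟨z, ?_, by simp only [μ, hnum, mul_div_cancel_right₀ x hden]⟩
      simpa [hk x z hden hnum, quadraticChar_sq_one' (pow_ne_zero n hden),
        -quadraticChar_apply] using hx
  exact (Finset.card_le_card hsub).trans <|
    (Finset.card_insert_le _ _).trans (Nat.add_le_add_right Finset.card_image_le 1)

omit [Fintype F] [DecidableEq F] in
lemma octahedral_form_eq {i r s x z : F} (hi : i ^ 2 = -1) (hr : r ^ 2 = 3) (hs : s ^ 2 = -2)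
    (hz : (1 + i) * ((1 + r) * s - 2 * z) = x * (2 * (s + (1 + r) * z))) :
    512 * (1 + i) * (1 + r) ^ 3 * (z ^ 6 + 5 * s * z ^ 3 + 1) =
      (x ^ 5 - x) * (2 * (s + (1 + r) * z)) ^ 6 := by
  have hmul : ((1 + r) * s - 2 * z) * (s + (1 + r) * z) = -2 * (1 + r) * (z ^ 2 - s * z + 1) := by
    linear_combination (1 + r) * hs + s * z * hr
  have hsq : ((1 + r) * s - 2 * z) ^ 2 + 2 * (s + (1 + r) * z) ^ 2 =
      (12 + 4 * r) * (z ^ 2 - 1) := by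
    linear_combination ((1 + r) ^ 2 + 2) * hs + (-2 + 2 * z ^ 2) * hr
  have hsextic : 2 * (z ^ 6 + 5 * s * z ^ 3 + 1) =
      (z ^ 2 - s * z + 1) * (3 * (z ^ 2 - 1) ^ 2 - (z ^ 2 - s * z + 1) ^ 2) := by
    linear_combination (3 * z ^ 2 + 3 * z ^ 4 - s * z ^ 3) * hs
  have hi4 : (1 + i) ^ 4 = -4 := by linear_combination (i ^ 2 + 4 * i + 5) * hi
  have hr2 : (12 + 4 * r) ^ 2 = 48 * (1 + r) ^ 2 := by linear_combination -32 * hr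
  set u := (1 + r) * s - 2 * z
  set v := s + (1 + r) * z
  symm
  calc (x ^ 5 - x) * (2 * v) ^ 6 = x * (2 * v) * (2 * v) * ((x * (2 * v)) ^ 4 - (2 * v) ^ 4) := by
        ring
    _ = -8 * (1 + i) * (u * v) * ((u ^ 2 + 2 * v ^ 2) ^ 2 - 4 * (u * v) ^ 2) := by
        rw [← hz, mul_pow, hi4]
        ring
    _ = 256 * (1 + i) * (1 + r) ^ 3 *
          ((z ^ 2 - s * z + 1) * (3 * (z ^ 2 - 1) ^ 2 - (z ^ 2 - s * z + 1) ^ 2)) := by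
        rw [hmul, hsq, mul_pow, hr2]
        ring
    _ = 512 * (1 + i) * (1 + r) ^ 3 * (z ^ 6 + 5 * s * z ^ 3 + 1) := by
        rw [← hsextic]
        ring

lemma exists_card_filter_quintic_le_sextic (hcard : Fintype.card F % 24 = 1)
    {ε : F} (hε : ε ≠ 0) :
    ∃ a c : F, a ^ 2 = -50 ∧ c ≠ 0 ∧
      (Finset.univ.filter fun x ↦ quadraticChar F (ε * (x ^ 5 - x)) = 1).card ≤
        (Finset.univ.filter fun z ↦
          quadraticChar F (c * (z ^ 6 + a * z ^ 3 + 1)) = 1).card + 1 := by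
  obtain ⟨h2, h3⟩ := two_ne_zero_and_three_ne_zero hcard
  obtain ⟨i, r, s, hi, hr, hs⟩ := exists_sq_eq_neg_one_and_sq_eq_three_and_sq_eq_neg_two hcard
  have hs0 : s ≠ 0 := by rintro rfl; apply h2; linear_combination hs
  have hi0 : 1 + i ≠ 0 := by intro h; apply h2; linear_combination (1 - i) * h + hi
  have hr0 : 1 + r ≠ 0 := by intro h; apply h2; linear_combination (r - 1) * h - hr
  have hr3 : 3 + r ≠ 0 := by
    intro h
    apply mul_ne_zero h2 h3
    linear_combination (3 - r) * h + hr
  refine ⟨5 * s, ε * (512 * (1 + i) * (1 + r) ^ 3), by linear_combination 25 * hs, ?_, ?_⟩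
  · have h512 : (512 : F) ≠ 0 := by convert pow_ne_zero 9 h2 using 1; norm_num
    exact mul_ne_zero hε (mul_ne_zero (mul_ne_zero h512 hi0) (pow_ne_zero 3 hr0))
  refine card_filter_quadraticChar_le_of_mobius (a := -2 * (1 + i)) (b := (1 + i) * (1 + r) * s)
    (c := 2 * (1 + r)) (d := 2 * s) (n := 3) ?_ fun x z _ hz ↦ ?_
  · have hprod := mul_ne_zero (mul_ne_zero (mul_ne_zero (pow_ne_zero 2 h2) hi0) hs0) hr3
    convert neg_ne_zero.2 hprod using 1
    linear_combination -2 * (1 + i) * s * hr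
  · have h := octahedral_form_eq (x := x) (z := z) hi hr hs (by linear_combination hz)
    linear_combination ε * h

end Rotation

section SplitFibres

variable {F : Type*} [Field F]

/-- The value `α` of the function `y / h` on the double cover `y ^ 2 = f` of the line *splits
completely* if it is taken at the largest possible number of rational points, namely `2 * d` when
`f` and `h ^ 2` have degree `2 * d`. The points are recorded by their `x`-coordinates, as
`y = α * h.eval x`. -/
def SplitsCompletely (f h : F[X]) (d : ℕ) (α : F) : Prop :=
  ∃ R : Finset F, R.card = 2 * d ∧ ∀ x ∈ R, (α * h.eval x) ^ 2 = f.eval x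

/-- The form `c * (X ^ (2 * n) + a * X ^ n + 1)`. Its zeros are permuted by the dihedral group
generated by `X ↦ ζ * X`, for `ζ` an `n`-th root of unity, and `X ↦ X⁻¹`. -/
noncomputable def dihedralForm (n : ℕ) (a c : F) : F[X] :=
  C c * (X ^ (2 * n) + C a * X ^ n + 1)

variable {n : ℕ} {a c : F}

lemma eval_dihedralForm (z : F) :
    (dihedralForm n a c).eval z = c * (z ^ (2 * n) + a * z ^ n + 1) := by
  simp [dihedralForm]

lemma natDegree_dihedralForm [NeZero n] (hc : c ≠ 0) :
    (dihedralForm n a c).natDegree = 2 * n := by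
  have hn : 0 < n := NeZero.pos n
  rw [dihedralForm, natDegree_C_mul hc]
  compute_degree!
  case coeff_ne_zero => simp [show 2 * n ≠ n by lia, hn.ne']
  all_goals lia

lemma isCoprime_dihedralForm_X_pow_add_one (ha : a ≠ 2) (hc : c ≠ 0) :
    IsCoprime (dihedralForm n a c) (X ^ n + 1) := by
  rw [dihedralForm, isCoprime_mul_unit_left_left (isUnit_C.2 hc.isUnit)]
  have hinv : C (a - 2)⁻¹ * (C a - 2) = (1 : F[X]) := by
    rw [← C_ofNat, ← C_sub, ← C_mul, inv_mul_cancel₀ (sub_ne_zero.2 ha), C_1]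
  refine ⟨-C (a - 2)⁻¹, C (a - 2)⁻¹ * (X ^ n + C a - 1), ?_⟩
  rw [mul_comm 2 n, pow_mul]
  linear_combination hinv

lemma separable_X_pow_add_C_mul_X_pow_add_one (hn : (n : F) ≠ 0) (ha : a ^ 2 ≠ 4) :
    (X ^ (2 * n) + C a * X ^ n + 1 : F[X]).Separable := by
  have hn0 : n ≠ 0 := by rintro rfl; exact hn Nat.cast_zero
  have hinv : C (4 - a ^ 2)⁻¹ * (4 - C a ^ 2) = (1 : F[X]) := by
    rw [← C_ofNat, ← C_pow, ← C_sub, ← C_mul, inv_mul_cancel₀ (sub_ne_zero.2 ha.symm), C_1]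
  have hninv : C (n : F)⁻¹ * (n : F[X]) = 1 := by
    rw [← map_natCast C n, ← C_mul, inv_mul_cancel₀ hn, C_1]
  have X_mul_derivative {k : ℕ} (hk : k ≠ 0) :
      X * derivative (X ^ k : F[X]) = (k : F[X]) * X ^ k := by
    rw [derivative_X_pow, map_natCast, mul_left_comm, mul_pow_sub_one hk]
  have hderiv : X * derivative (X ^ (2 * n) + C a * X ^ n + 1 : F[X]) =
      (n : F[X]) * (2 * (X ^ n) ^ 2 + C a * X ^ n) := by
    rw [derivative_add, derivative_add, derivative_C_mul, derivative_one, add_zero, mul_add,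
      mul_left_comm, X_mul_derivative hn0, X_mul_derivative (mul_ne_zero two_ne_zero hn0),
      mul_comm 2 n, pow_mul]
    push_cast
    ring
  refine ⟨C (4 - a ^ 2)⁻¹ * (4 - C a ^ 2 - 2 * C a * X ^ n),
    -C (4 - a ^ 2)⁻¹ * C (n : F)⁻¹ * (2 - C a ^ 2 - C a * X ^ n) * X, ?_⟩
  rw [mul_assoc _ X, hderiv, mul_comm 2 n, pow_mul]
  linear_combination hinv -
    C (4 - a ^ 2)⁻¹ * (2 - C a ^ 2 - C a * X ^ n) * (2 * (X ^ n) ^ 2 + C a * X ^ n) * hninv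

lemma not_isSquare_dihedralForm (hn : (n : F) ≠ 0) (ha : a ^ 2 ≠ 4) (hc : c ≠ 0) :
    ¬ IsSquare (dihedralForm n a c) := by
  have : NeZero n := ⟨by rintro rfl; exact hn Nat.cast_zero⟩
  have hsqfree : Squarefree (dihedralForm n a c) :=
    ((associated_unit_mul_left _ _ (isUnit_C.2 hc.isUnit)).squarefree_iff).2
      (separable_X_pow_add_C_mul_X_pow_add_one hn ha).squarefree
  rintro ⟨g, hg⟩
  have hunit : IsUnit g := hsqfree g (hg ▸ dvd_rfl)
  have hdeg := natDegree_eq_zero_of_isUnit (hunit.mul hunit)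
  rw [← hg, natDegree_dihedralForm hc] at hdeg
  exact NeZero.ne n (by lia)

lemma card_nthRootsFinset_union [NeZero n] [DecidableEq F] {ζ z : F} (hζ : IsPrimitiveRoot ζ n)
    (hz : z ≠ 0) (hz1 : z ^ (2 * n) ≠ 1) :
    (nthRootsFinset n (z ^ n) ∪ nthRootsFinset n (z ^ n)⁻¹).card = 2 * n := by
  have card_eq {w : F} (hw : w ≠ 0) : (nthRootsFinset n (w ^ n)).card = n := by
    rw [nthRootsFinset_def, Multiset.toFinset_card_of_nodup (hζ.nthRoots_nodup (pow_ne_zero n hw)),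
      hζ.card_nthRoots, if_pos ⟨w, rfl⟩]
  have hdisj : Disjoint (nthRootsFinset n (z ^ n)) (nthRootsFinset n (z ^ n)⁻¹) := by
    rw [Finset.disjoint_left]
    intro w hw hw'
    rw [mem_nthRootsFinset (NeZero.pos n)] at hw hw'
    refine hz1 ?_
    rw [two_mul, pow_add, ← mul_inv_cancel₀ (pow_ne_zero n hz), ← hw', hw]
  rw [Finset.card_union_of_disjoint hdisj, card_eq hz, ← inv_pow, card_eq (inv_ne_zero hz), two_mul]

lemma mem_nthRootsFinset_union_iff [NeZero n] [DecidableEq F] {u x : F} :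
    x ∈ nthRootsFinset n u ∪ nthRootsFinset n u⁻¹ ↔ x ^ n = u ∨ x ^ n = u⁻¹ := by
  simp only [Finset.mem_union, mem_nthRootsFinset (NeZero.pos n)]

lemma splitsCompletely_dihedralForm [NeZero n] {ζ z α : F} (hζ : IsPrimitiveRoot ζ n)
    (hz : z ≠ 0) (hz1 : z ^ (2 * n) ≠ 1)
    (hα : (α * (X ^ n + 1 : F[X]).eval z) ^ 2 = (dihedralForm n a c).eval z) :
    SplitsCompletely (dihedralForm n a c) (X ^ n + 1) n α := by
  classical
  refine ⟨_, card_nthRootsFinset_union hζ hz hz1, fun x hx ↦ ?_⟩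
  have hu : z ^ n ≠ 0 := pow_ne_zero n hz
  simp only [eval_dihedralForm, eval_add, eval_pow, eval_X, eval_one, mul_comm 2 n, pow_mul]
    at hα ⊢
  rcases mem_nthRootsFinset_union_iff.1 hx with h | h <;> rw [h]
  · exact hα
  · field_simp
    linear_combination hα

lemma pow_eq_or_eq_inv_of_dihedralForm_fibre {x z β : F} (ha : a ≠ 2) (hc : c ≠ 0)
    (hx : β * (X ^ n + 1 : F[X]).eval x ^ 2 = (dihedralForm n a c).eval x)
    (hz : β * (X ^ n + 1 : F[X]).eval z ^ 2 = (dihedralForm n a c).eval z) :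
    x ^ n = z ^ n ∨ x ^ n = (z ^ n)⁻¹ := by
  simp only [eval_dihedralForm, eval_add, eval_pow, eval_X, eval_one, mul_comm 2 n, pow_mul]
    at hx hz
  have hprod : c * (a - 2) * ((x ^ n - z ^ n) * (x ^ n * z ^ n - 1)) = 0 := by
    linear_combination (z ^ n + 1) ^ 2 * hx - (x ^ n + 1) ^ 2 * hz
  rcases mul_eq_zero.1 ((mul_eq_zero.1 hprod).resolve_left
    (mul_ne_zero hc (sub_ne_zero.2 ha))) with h | h
  · exact .inl (sub_eq_zero.1 h)
  · exact .inr (eq_inv_of_mul_eq_one_left (sub_eq_zero.1 h))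

variable [Fintype F]

lemma card_filter_sq_mem [DecidableEq F] (hF : ringChar F ≠ 2) {B : Finset F}
    (hB : ∀ b ∈ B, quadraticChar F b = 1) :
    (Finset.univ.filter fun x : F ↦ x ^ 2 ∈ B).card = 2 * B.card := by
  refine card_filter_mem_of_card_fiber_eq fun b hb ↦ ?_
  have hcard := card_filter_sq_eq hF b
  rw [hB b hb] at hcard
  exact_mod_cast hcard

lemma exists_card_le_mul_card_splitsCompletely [DecidableEq F] [NeZero n] {ζ : F}
    (hF : ringChar F ≠ 2) (hζ : IsPrimitiveRoot ζ n) (ha : a ≠ 2) (hc : c ≠ 0) {S : Finset F}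
    (hS : ∀ z ∈ S, quadraticChar F ((dihedralForm n a c).eval z) = 1)
    (hS0 : ∀ z ∈ S, z ≠ 0) (hS1 : ∀ z ∈ S, z ^ (2 * n) ≠ 1) :
    ∃ T : Finset F, (∀ α ∈ T, SplitsCompletely (dihedralForm n a c) (X ^ n + 1) n α) ∧
      S.card ≤ n * T.card := by
  let f := dihedralForm n a c
  let h : F[X] := X ^ n + 1
  let β (z : F) : F := f.eval z / h.eval z ^ 2
  have hh {z : F} (hz : z ∈ S) : h.eval z ≠ 0 := by
    intro hzero
    have hzn : z ^ n = -1 := by simpa [h, add_eq_zero_iff_eq_neg] using hzero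
    exact hS1 z hz (by rw [mul_comm, pow_mul, hzn, neg_one_sq])
  have hβ {z : F} (hz : z ∈ S) : β z * h.eval z ^ 2 = f.eval z :=
    div_mul_cancel₀ _ (pow_ne_zero 2 (hh hz))
  have hfibres : S.card ≤ 2 * n * (S.image β).card := by
    refine Finset.card_le_mul_card_image _ _ fun b hb ↦ ?_
    obtain ⟨z, hz, rfl⟩ := Finset.mem_image.1 hb
    rw [← card_nthRootsFinset_union hζ (hS0 z hz) (hS1 z hz)]
    refine Finset.card_le_card fun x hx ↦ mem_nthRootsFinset_union_iff.2 ?_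
    obtain ⟨hxS, hxz⟩ := Finset.mem_filter.1 hx
    exact pow_eq_or_eq_inv_of_dihedralForm_fibre ha hc (hxz ▸ hβ hxS) (hβ hz)
  have hsqrt : (Finset.univ.filter fun α ↦ α ^ 2 ∈ S.image β).card = 2 * (S.image β).card := by
    refine card_filter_sq_mem hF fun b hb ↦ ?_
    obtain ⟨z, hz, rfl⟩ := Finset.mem_image.1 hb
    have hz1 : quadraticChar F (f.eval z) = 1 := hS z hz
    rwa [← hβ hz, map_mul, quadraticChar_sq_one' (hh hz), mul_one] at hz1
  refine ⟨Finset.univ.filter fun α ↦ α ^ 2 ∈ S.image β, fun α hα ↦ ?_,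
    by rwa [hsqrt, ← mul_assoc, mul_comm n]⟩
  obtain ⟨z, hz, hzα⟩ := Finset.mem_image.1 (Finset.mem_filter.1 hα).2
  refine splitsCompletely_dihedralForm hζ (hS0 z hz) (hS1 z hz) ?_
  rw [mul_pow, ← hzα, hβ hz]

lemma exists_card_splitsCompletely_dihedralForm [DecidableEq F] [NeZero n] {ζ : F}
    (hF : ringChar F ≠ 2) (hζ : IsPrimitiveRoot ζ n) (ha : a ≠ 2) (hc : c ≠ 0) :
    ∃ T : Finset F, (∀ α ∈ T, SplitsCompletely (dihedralForm n a c) (X ^ n + 1) n α) ∧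
      (Finset.univ.filter fun z ↦ quadraticChar F ((dihedralForm n a c).eval z) = 1).card ≤
        n * T.card + (2 * n + 1) := by
  let N := Finset.univ.filter fun z ↦ quadraticChar F ((dihedralForm n a c).eval z) = 1
  obtain ⟨T, hT, hcount⟩ := exists_card_le_mul_card_splitsCompletely hF hζ ha hc
    (S := N.filter fun z ↦ ¬ z ^ (2 * n + 1) = z)
    (fun z hz ↦ (Finset.mem_filter.1 (Finset.mem_filter.1 hz).1).2)
    (fun z hz hz0 ↦ (Finset.mem_filter.1 hz).2 (by rw [hz0, zero_pow (Nat.succ_ne_zero _)]))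
    (fun z hz hz1 ↦ (Finset.mem_filter.1 hz).2 (by rw [pow_succ, hz1, one_mul]))
  refine ⟨T, hT, ?_⟩
  have hexcluded := Finset.card_le_card
    (Finset.filter_subset_filter (fun z ↦ z ^ (2 * n + 1) = z) (Finset.subset_univ N))
  have hpow := card_filter_pow_eq_self_le (F := F)
    (show 1 < 2 * n + 1 by have := NeZero.pos n; lia)
  have hsplit : _ + _ = N.card :=
    Finset.card_filter_add_card_filter_not (s := N) (fun z ↦ z ^ (2 * n + 1) = z)
  lia

lemma exists_card_splitsCompletely {P : ℕ} (hcard : Fintype.card F = P ^ 2)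
    (hP : P % 8 = 5 ∨ P % 8 = 7) :
    ∃ f : F[X], f.natDegree = 6 ∧ IsCoprime f (X ^ 3 + 1) ∧ ¬ IsSquare f ∧
      ∃ T : Finset F, (∀ α ∈ T, SplitsCompletely f (X ^ 3 + 1) 3 α) ∧
        Fintype.card F + 4 * P ≤ 6 * T.card + 21 := by
  classical
  have hF := ringChar_ne_two_of_card_eq_sq hcard (by grind)
  have hcard24 := card_mod_twentyFour_eq_one hcard hP
  obtain ⟨h2, h3⟩ := two_ne_zero_and_three_ne_zero hcard24
  obtain ⟨ε, hε, hquintic⟩ := exists_card_add_four_mul_le hcard hP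
  obtain ⟨a, c, ha, hc, hsextic⟩ := exists_card_filter_quintic_le_sextic hcard24 hε
  have ha4 : a ^ 2 ≠ 4 := by
    intro h
    refine mul_ne_zero h2 (pow_ne_zero 3 h3) ?_
    linear_combination ha - h
  obtain ⟨ζ, hζ⟩ := exists_isPrimitiveRoot_of_prime_dvd (F := F) Nat.prime_three (by lia)
  obtain ⟨T, hT, hcount⟩ := exists_card_splitsCompletely_dihedralForm hF hζ
    (show a ≠ 2 by rintro rfl; exact ha4 (by norm_num)) hc
  simp only [eval_dihedralForm] at hcount
  refine ⟨dihedralForm 3 a c, natDegree_dihedralForm hc, ?_, ?_, T, hT, by lia⟩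
  · exact isCoprime_dihedralForm_X_pow_add_one (by rintro rfl; exact ha4 (by norm_num)) hc
  · exact not_isSquare_dihedralForm (by exact_mod_cast h3) ha4 hc

end SplitFibres

section PointEvaluation

variable {F : Type*} [Field F] {f : F[X]} {d : ℕ}

/-- The coordinate ring of the affine double cover `y ^ 2 = f` of the line, with `y` given by
`QuadraticAlgebra.omega`. -/
abbrev DoubleCoverRing (f : F[X]) : Type _ := QuadraticAlgebra F[X] f 0

open QuadraticAlgebra

/-- Evaluation of the functions on `y ^ 2 = f` at the rational point `(x, y)`. -/
noncomputable def evalPoint {x y : F} (hxy : y ^ 2 = f.eval x) : DoubleCoverRing f →+* F where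
  toFun z := z.re.eval x + y * z.im.eval x
  map_zero' := by simp
  map_one' := by simp
  map_add' z w := by
    simp only [re_add, im_add, eval_add]
    ring
  map_mul' z w := by
    simp only [re_mul, im_mul, eval_add, eval_mul, eval_zero, ← hxy]
    ring

lemma evalPoint_apply {x y : F} (hxy : y ^ 2 = f.eval x) (z : DoubleCoverRing f) :
    evalPoint hxy z = z.re.eval x + y * z.im.eval x := rfl

/-- The functions `U + V * y` on `y ^ 2 = f` whose poles at infinity have total order at most
`2 * d * n`, when `f` has degree `2 * d`: then `y` has poles of total order `2 * d`. -/
def poleOrderLE (f : F[X]) (d n : ℕ) : AddSubmonoid (DoubleCoverRing f) where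
  carrier := {z | z.re.degree ≤ (d * n : ℕ) ∧ z.im.degree + d ≤ (d * n : ℕ)}
  zero_mem' := by simp
  add_mem' {z w} hz hw := by
    refine ⟨(degree_add_le _ _).trans (max_le hz.1 hw.1), ?_⟩
    calc (z.im + w.im).degree + d ≤ max z.im.degree w.im.degree + d := by
          gcongr
          exact degree_add_le _ _
      _ ≤ (d * n : ℕ) := by
          rw [← max_add_add_right]
          exact max_le hz.2 hw.2

lemma algebraMap_mem_poleOrderLE {p : F[X]} {n : ℕ} (hp : p.natDegree ≤ d * n) :
    algebraMap F[X] (DoubleCoverRing f) p ∈ poleOrderLE f d n :=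
  ⟨degree_le_of_natDegree_le hp, by simp⟩

lemma omega_mem_poleOrderLE : (ω : DoubleCoverRing f) ∈ poleOrderLE f d 1 := by
  constructor <;> simp

lemma mul_mem_poleOrderLE (hf : f.natDegree ≤ 2 * d) {m n : ℕ} {z w : DoubleCoverRing f}
    (hz : z ∈ poleOrderLE f d m) (hw : w ∈ poleOrderLE f d n) :
    z * w ∈ poleOrderLE f d (m + n) := by
  have hcast : ((d * (m + n) : ℕ) : WithBot ℕ) = (d * m : ℕ) + (d * n : ℕ) := by
    rw [mul_add, Nat.cast_add]
  constructor
  · rw [re_mul, hcast]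
    refine (degree_add_le _ _).trans (max_le ?_ ?_)
    · rw [degree_mul]
      exact add_le_add hz.1 hw.1
    · calc (f * z.im * w.im).degree = f.degree + z.im.degree + w.im.degree := by
            rw [degree_mul, degree_mul]
        _ ≤ (2 * d : ℕ) + z.im.degree + w.im.degree := by
            gcongr
            exact degree_le_of_natDegree_le hf
        _ = (z.im.degree + d) + (w.im.degree + d) := by
            push_cast
            ring
        _ ≤ (d * m : ℕ) + (d * n : ℕ) := add_le_add hz.2 hw.2
  · rw [im_mul, zero_mul, zero_mul, add_zero, hcast]
    calc (z.re * w.im + z.im * w.re).degree + d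
        ≤ max (z.re.degree + w.im.degree) (z.im.degree + w.re.degree) + d := by
          gcongr
          simpa only [degree_mul] using degree_add_le (z.re * w.im) (z.im * w.re)
      _ = max (z.re.degree + (w.im.degree + d)) (z.im.degree + d + w.re.degree) := by
          rw [← max_add_add_right, add_assoc, add_right_comm]
      _ ≤ (d * m : ℕ) + (d * n : ℕ) :=
          max_le (add_le_add hz.1 hw.2) (add_le_add hz.2 hw.1)

lemma pow_mem_poleOrderLE (hf : f.natDegree ≤ 2 * d) {m : ℕ} {z : DoubleCoverRing f}
    (hz : z ∈ poleOrderLE f d m) (n : ℕ) : z ^ n ∈ poleOrderLE f d (m * n) := by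
  induction n with
  | zero => simpa using algebraMap_mem_poleOrderLE (f := f) (p := 1) (n := 0) (by simp)
  | succ n ih => exact mul_mem_poleOrderLE hf ih hz

lemma natDegree_norm_le (hf : f.natDegree ≤ 2 * d) {n : ℕ} {z : DoubleCoverRing f}
    (hz : z ∈ poleOrderLE f d n) : z.norm.natDegree ≤ 2 * d * n := by
  have hstar : star z ∈ poleOrderLE f d n := ⟨by simpa using hz.1, by simpa using hz.2⟩
  have hmem := (mul_mem_poleOrderLE hf hz hstar).1
  rw [← algebraMap_norm_eq_mul_star, algebraMap_re] at hmem
  exact (natDegree_le_of_degree_le hmem).trans_eq (by ring)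

lemma norm_ne_zero_of_not_isSquare (hf : ¬ IsSquare f) {z : DoubleCoverRing f} (hz : z ≠ 0) :
    z.norm ≠ 0 := by
  intro hnorm
  have hsq : z.re ^ 2 = f * z.im ^ 2 := by
    rw [norm_def] at hnorm
    linear_combination hnorm
  have him : z.im ≠ 0 := by
    intro him
    rw [him, zero_pow two_ne_zero, mul_zero] at hsq
    exact hz (QuadraticAlgebra.ext (pow_eq_zero_iff two_ne_zero |>.1 hsq) him)
  obtain ⟨g, hg⟩ := (UniqueFactorizationMonoid.pow_dvd_pow_iff_dvd two_ne_zero).1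
    (Dvd.intro_left f hsq.symm)
  refine hf ⟨g, mul_right_cancel₀ (pow_ne_zero 2 him) ?_⟩
  rw [← hsq, hg]
  ring

/-- If both coordinates of `z` vanish at `x` then so does its norm to order two; otherwise at most
one of the points above `x` is a zero of `z`. -/
lemma card_zeros_above_le_rootMultiplicity {z : DoubleCoverRing f}
    (hz : z.norm ≠ 0) (x : F) {Y : Finset F} (hY : ∀ y ∈ Y, y ^ 2 = f.eval x)
    (hY0 : ∀ y ∈ Y, z.re.eval x + y * z.im.eval x = 0) :
    Y.card ≤ z.norm.rootMultiplicity x := by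
  rcases Y.eq_empty_or_nonempty with rfl | ⟨y, hy⟩
  · simp
  by_cases him : z.im.eval x = 0
  · have hre : z.re.eval x = 0 := by simpa [him] using hY0 y hy
    have hcard : Y.card ≤ 2 := by
      classical
      refine (Finset.card_le_card fun y hy ↦ ?_).trans
        ((Multiset.toFinset_card_le _).trans (card_nthRoots 2 (f.eval x)))
      simpa using hY y hy
    obtain ⟨U, hU⟩ := dvd_iff_isRoot.2 hre
    obtain ⟨V, hV⟩ := dvd_iff_isRoot.2 him
    refine hcard.trans ((le_rootMultiplicity_iff hz).2 ⟨U ^ 2 - f * V ^ 2, ?_⟩)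
    rw [norm_def, hU, hV]
    ring
  · have hcard : Y.card ≤ 1 := Finset.card_le_one.2 fun y₁ h₁ y₂ h₂ ↦
      mul_right_cancel₀ him (by linear_combination hY0 y₁ h₁ - hY0 y₂ h₂)
    refine hcard.trans ((rootMultiplicity_pos hz).2 ?_)
    rw [IsRoot, norm_def]
    simp only [eval_sub, eval_add, eval_mul, eval_zero, ← hY y hy]
    linear_combination (z.re.eval x - y * z.im.eval x) * hY0 y hy

lemma card_zeros_le_natDegree_norm {z : DoubleCoverRing f} (hz : z.norm ≠ 0)
    {Z : Finset (F × F)} (hZ : ∀ p ∈ Z, ∃ hp : p.2 ^ 2 = f.eval p.1, evalPoint hp z = 0) :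
    Z.card ≤ z.norm.natDegree := by
  classical
  calc Z.card = ∑ x ∈ Z.image Prod.fst, (Z.filter fun p ↦ p.1 = x).card :=
        Finset.card_eq_sum_card_image _ _
    _ ≤ ∑ x ∈ Z.image Prod.fst, z.norm.rootMultiplicity x := by
        refine Finset.sum_le_sum fun x _ ↦ ?_
        have hinj : Set.InjOn Prod.snd (Z.filter fun p ↦ p.1 = x : Set (F × F)) := by
          intro p hp q hq hpq
          simp only [Finset.mem_coe, Finset.mem_filter] at hp hq
          exact Prod.ext (hp.2.trans hq.2.symm) hpq
        rw [← Finset.card_image_of_injOn hinj]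
        refine card_zeros_above_le_rootMultiplicity hz x ?_ ?_ <;>
        · simp only [Finset.mem_image, Finset.mem_filter]
          rintro _ ⟨p, ⟨hp, rfl⟩, rfl⟩
          obtain ⟨hcurve, hzero⟩ := hZ p hp
          assumption
    _ = Multiset.card (z.norm.roots.filter (· ∈ Z.image Prod.fst)) := by
        rw [← Multiset.sum_count_eq_card fun x hx ↦ (Multiset.mem_filter.1 hx).2]
        refine Finset.sum_congr rfl fun x hx ↦ ?_
        rw [Multiset.count_filter_of_pos hx, count_roots]
    _ ≤ Multiset.card z.norm.roots := Multiset.card_le_card (Multiset.filter_le _ _)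
    _ ≤ z.norm.natDegree := card_roots' _

lemma card_zeros_le (hdeg : f.natDegree ≤ 2 * d) (hf : ¬ IsSquare f) {n : ℕ}
    {z : DoubleCoverRing f} (hz : z ∈ poleOrderLE f d n) (hz0 : z ≠ 0) {Z : Finset (F × F)}
    (hZ : ∀ p ∈ Z, ∃ hp : p.2 ^ 2 = f.eval p.1, evalPoint hp z = 0) : Z.card ≤ 2 * d * n :=
  (card_zeros_le_natDegree_norm (norm_ne_zero_of_not_isSquare hf hz0) hZ).trans
    (natDegree_norm_le hdeg hz)

end PointEvaluation

section Encoding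

variable {F : Type*} [Field F] {f h : F[X]} {d t : ℕ}

open QuadraticAlgebra

/-- The numerator of the function `∑ k, p k * (y / h) ^ k / h + c * (y / h) ^ t` on `y ^ 2 = f`
over the denominator `h ^ t`. -/
noncomputable def codeNumerator (f h : F[X]) {t : ℕ} (p : Fin t → F[X]) (c : F) :
    DoubleCoverRing f :=
  ∑ k, algebraMap F[X] _ (p k * h ^ (k.rev : ℕ)) * ω ^ (k : ℕ) + algebraMap F[X] _ (C c) * ω ^ t

lemma codeNumerator_mem_poleOrderLE (hf : f.natDegree ≤ 2 * d) (hh : h.natDegree ≤ d)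
    {p : Fin t → F[X]} (hp : ∀ k, (p k).natDegree ≤ d) (c : F) :
    codeNumerator f h p c ∈ poleOrderLE f d t := by
  have omega_pow_mem (n : ℕ) : (ω : DoubleCoverRing f) ^ n ∈ poleOrderLE f d n := by
    simpa using pow_mem_poleOrderLE hf omega_mem_poleOrderLE n
  refine add_mem (sum_mem fun k _ ↦ ?_) ?_
  · have hk : (k.rev : ℕ) + 1 + k = t := by rw [Fin.val_rev]; lia
    have hcoeff : (p k * h ^ (k.rev : ℕ)).natDegree ≤ d * (k.rev + 1) := by
      rw [mul_add_one, add_comm]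
      exact natDegree_mul_le_of_le (hp k) ((natDegree_pow_le_of_le _ hh).trans_eq (mul_comm _ _))
    have hmem := mul_mem_poleOrderLE hf (algebraMap_mem_poleOrderLE hcoeff) (omega_pow_mem k)
    rwa [hk] at hmem
  · have hmem := mul_mem_poleOrderLE hf
      (algebraMap_mem_poleOrderLE (p := C c) (n := 0) (by simp)) (omega_pow_mem t)
    rwa [zero_add] at hmem

lemma codeNumerator_succ (p : Fin (t + 1) → F[X]) (c : F) :
    codeNumerator f h p c = algebraMap F[X] _ h * codeNumerator f h (fun k ↦ p k.castSucc) 0 +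
      ⟨p (Fin.last t), C c⟩ * ω ^ t := by
  have hmk : (⟨p (Fin.last t), C c⟩ : DoubleCoverRing f) =
      algebraMap F[X] _ (p (Fin.last t)) + algebraMap F[X] _ (C c) * ω := by
    ext <;> simp
  have hsum : codeNumerator f h (fun k ↦ p k.castSucc) 0 =
      ∑ k : Fin t, algebraMap F[X] _ (p k.castSucc * h ^ (k.rev : ℕ)) * ω ^ (k : ℕ) := by
    rw [codeNumerator, C_0, map_zero, zero_mul, add_zero]
  have hterm (k : Fin t) : algebraMap F[X] (DoubleCoverRing f) (p k.castSucc *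
      h ^ (k.castSucc.rev : ℕ)) * ω ^ (k.castSucc : ℕ) = algebraMap F[X] _ h *
      (algebraMap F[X] _ (p k.castSucc * h ^ (k.rev : ℕ)) * ω ^ (k : ℕ)) := by
    rw [Fin.rev_castSucc, Fin.val_succ, Fin.val_castSucc, pow_succ, map_mul, map_mul, map_mul]
    ring
  rw [codeNumerator, hsum, hmk, Fin.sum_univ_castSucc, Finset.mul_sum,
    Finset.sum_congr rfl fun k _ ↦ hterm k, Fin.rev_last, Fin.val_last, Fin.val_zero, pow_zero,
    mul_one, pow_succ]
  ring

lemma isCoprime_algebraMap_omega (hfh : IsCoprime f h) :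
    IsCoprime (algebraMap F[X] (DoubleCoverRing f) h) ω := by
  have hsq : (ω : DoubleCoverRing f) * ω = algebraMap F[X] _ f := by
    rw [omega_mul_omega_eq_mk, QuadraticAlgebra.algebraMap_eq]
  have hcop := (hfh.map (algebraMap F[X] (DoubleCoverRing f))).symm
  rw [← hsq] at hcop
  exact hcop.of_mul_right_left

lemma exists_eq_mul_C_of_dvd {p q : F[X]} (hdvd : q ∣ p) (hdeg : p.natDegree ≤ q.natDegree) :
    ∃ e, p = q * C e := by
  obtain ⟨r, rfl⟩ := hdvd
  by_cases hqr : q * r = 0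
  · exact ⟨0, by rw [hqr, C_0, mul_zero]⟩
  · rw [natDegree_mul (left_ne_zero_of_mul hqr) (right_ne_zero_of_mul hqr)] at hdeg
    exact ⟨r.coeff 0, by rw [← eq_C_of_natDegree_eq_zero (by lia)]⟩

lemma codeNumerator_eq_zero (hfh : IsCoprime f h) (hd : d ≠ 0) (hh : h.natDegree = d)
    {p : Fin t → F[X]} (hp : ∀ k, (p k).natDegree ≤ d) {c : F} (hzero : codeNumerator f h p c = 0) :
    p = 0 ∧ c = 0 := by
  induction t generalizing c with
  | zero =>
    refine ⟨Subsingleton.elim _ _, ?_⟩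
    simpa [codeNumerator, QuadraticAlgebra.ext_iff] using hzero
  | succ t ih =>
    have hh0 : h ≠ 0 := by rintro rfl; exact hd (hh.symm.trans natDegree_zero)
    rw [codeNumerator_succ] at hzero
    have hdvd : algebraMap F[X] (DoubleCoverRing f) h ∣ ⟨p (Fin.last t), C c⟩ :=
      (isCoprime_algebraMap_omega hfh).pow_right.dvd_of_dvd_mul_right
        (Dvd.intro (-codeNumerator f h (fun k ↦ p k.castSucc) 0) (by linear_combination -hzero))
    rw [algebraMap_dvd_iff] at hdvd
    have hc : c = 0 :=
      C_eq_zero.1 (eq_zero_of_dvd_of_natDegree_lt hdvd.2 (by rw [natDegree_C]; lia))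
    have hdvd_re : h ∣ p (Fin.last t) := hdvd.1
    obtain ⟨e, he⟩ := exists_eq_mul_C_of_dvd hdvd_re ((hp _).trans_eq hh.symm)
    have hlast : (⟨p (Fin.last t), C c⟩ : DoubleCoverRing f) =
        algebraMap F[X] _ h * algebraMap F[X] _ (C e) := by
      rw [he, hc, C_0, ← map_mul]
      rfl
    have hcancel : codeNumerator f h (fun k ↦ p k.castSucc) e = 0 := by
      suffices hsmul : h • codeNumerator f h (fun k ↦ p k.castSucc) e = 0 from
        (smul_eq_zero.1 hsmul).resolve_left hh0
      rw [Algebra.smul_def, ← hzero, hlast, codeNumerator, codeNumerator]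
      simp only [map_zero]
      ring
    obtain ⟨hinit, rfl⟩ := ih (fun k ↦ hp k.castSucc) hcancel
    refine ⟨funext (Fin.lastCases ?_ fun k ↦ congrFun hinit k), hc⟩
    rw [he, C_0, mul_zero, Pi.zero_apply]

/-- The messages: `t` polynomials of degree at most `d`, together with a scalar. -/
abbrev Message (F : Type*) [Field F] (d t : ℕ) : Type _ := (Fin t → degreeLT F (d + 1)) × F

/-- The polynomial interpolating the codeword of the message `v` on the repair group where
`y / h = α`: there it is the restriction of `∑ k, v.1 k * (y / h) ^ k + v.2 * h * (y / h) ^ t`. -/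
noncomputable def repairPolynomial (h : F[X]) (α : F) :
    Message F d t →ₗ[F] F[X] where
  toFun v := ∑ k, α ^ k.val • (v.1 k : F[X]) + (v.2 * α ^ t) • h
  map_add' v w := by
    simp only [Prod.fst_add, Prod.snd_add, Pi.add_apply, Submodule.coe_add, smul_add,
      Finset.sum_add_distrib, add_mul, add_smul]
    ring
  map_smul' a v := by
    simp only [Prod.smul_fst, Prod.smul_snd, Pi.smul_apply, Submodule.coe_smul, smul_eq_mul,
      RingHom.id_apply, smul_add, Finset.smul_sum, smul_smul, mul_comm _ a, mul_assoc]

lemma repairPolynomial_apply (α : F) (v : Message F d t) :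
    repairPolynomial h α v = ∑ k, α ^ k.val • (v.1 k : F[X]) + (v.2 * α ^ t) • h := rfl

lemma natDegree_message_le (v : Message F d t) (k : Fin t) :
    (v.1 k : F[X]).natDegree ≤ d :=
  natDegree_le_iff_degree_le.2 <| mem_degreeLE.1 <| by
    rw [← degreeLT_succ_eq_degreeLE]
    exact (v.1 k).2

lemma natDegree_repairPolynomial_le (hh : h.natDegree ≤ d) (α : F)
    (v : Message F d t) : (repairPolynomial h α v).natDegree ≤ d := by
  refine natDegree_add_le_of_degree_le (natDegree_sum_le_of_forall_le _ _ fun k _ ↦ ?_)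
    ((natDegree_smul_le _ _).trans hh)
  exact (natDegree_smul_le _ _).trans (natDegree_message_le v k)

lemma mul_evalPoint_codeNumerator {x α : F} (hα : (α * h.eval x) ^ 2 = f.eval x)
    (v : Message F d t) :
    h.eval x * evalPoint hα (codeNumerator f h (fun k ↦ v.1 k) v.2) =
      h.eval x ^ t * (repairPolynomial h α v).eval x := by
  have hω : evalPoint hα ω = α * h.eval x := by simp [evalPoint_apply]
  have hC (p : F[X]) : evalPoint hα (algebraMap F[X] _ p) = p.eval x := by simp [evalPoint_apply]
  rw [codeNumerator, repairPolynomial_apply, map_add, map_sum, eval_add, eval_finsetSum, mul_add,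
    mul_add, Finset.mul_sum, Finset.mul_sum]
  congr 1
  · refine Finset.sum_congr rfl fun k _ ↦ ?_
    have hk : t = k.rev + 1 + k := by rw [Fin.val_rev]; lia
    have hpow : h.eval x ^ t = h.eval x ^ (k.rev : ℕ) * h.eval x * h.eval x ^ (k : ℕ) := by
      rw [← pow_succ, ← pow_add, ← hk]
    rw [map_mul, map_pow, hω, hC, eval_mul, eval_pow, eval_smul, smul_eq_mul, hpow]
    ring
  · rw [map_mul, map_pow, hω, hC, eval_C, eval_smul, smul_eq_mul]
    ring

end Encoding

section Code

variable {F : Type*} [Field F] {f h : F[X]} {d t : ℕ}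

lemma existsOptimalLRC_of_linearMap [DecidableEq F] {ι κ V : Type*} [Fintype ι]
    [DecidableEq κ] [AddCommGroup V] [Module F V] {n k D r δ : ℕ} (φ : V →ₗ[F] ι → F) (π : ι → κ)
    (hn : Fintype.card ι = n) (hk : Module.finrank F V = k) (hD : 0 < D)
    (hweight : ∀ v ≠ 0, D ≤ (Finset.univ.filter fun i ↦ φ v i ≠ 0).card)
    (hattained : ∃ v ≠ 0, (Finset.univ.filter fun i ↦ φ v i ≠ 0).card = D)
    (hgroup : ∀ i, (Finset.univ.filter fun j ↦ π j = π i).card ≤ r + δ - 1)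
    (hlocal : ∀ v i, φ v i ≠ 0 →
      δ ≤ (Finset.univ.filter fun j ↦ π j = π i ∧ φ v j ≠ 0).card)
    (hopt : SingletonOptimal n k D r δ) : ExistsOptimalLRC F n k D r δ := by
  subst hn
  let e := (Fintype.equivFin ι).symm
  let ψ : V →ₗ[F] Fin (Fintype.card ι) → F := LinearMap.funLeft F F e ∘ₗ φ
  have card_comp (p : ι → Prop) [DecidablePred p] :
      (Finset.univ.filter fun i ↦ p (e i)).card = (Finset.univ.filter p).card :=
    Finset.card_equiv e (by simp)
  have hwt (v : V) : hammingWt (ψ v) = (Finset.univ.filter fun i ↦ φ v i ≠ 0).card :=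
    card_comp fun i ↦ φ v i ≠ 0
  have hker (v : V) (hv : v ≠ 0) : ψ v ≠ 0 := by
    intro hzero
    have hwt0 : hammingWt (ψ v) = 0 := by simp [hzero, hammingWt]
    exact (hD.trans_le (hweight v hv)).ne' ((hwt v).symm.trans hwt0)
  have hinj : Function.Injective ψ :=
    (injective_iff_map_eq_zero ψ).2 fun v hv ↦ by_contra fun hv0 ↦ hker v hv0 hv
  refine ⟨LinearMap.range ψ, (LinearMap.finrank_range_of_inj hinj).trans hk, ⟨?_, ?_⟩, ?_, hopt⟩
  · rintro _ ⟨v, rfl⟩ hv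
    rw [hwt]
    exact hweight v fun hv0 ↦ hv (hv0 ▸ map_zero ψ)
  · obtain ⟨v, hv, hvD⟩ := hattained
    exact ⟨ψ v, ⟨v, rfl⟩, hker v hv, (hwt v).trans hvD⟩
  · refine fun i ↦ ⟨Finset.univ.filter fun j ↦ π (e j) = π (e i), by simp,
      (card_comp fun j ↦ π j = π (e i)).trans_le (hgroup (e i)), ?_⟩
    rintro _ ⟨v, rfl⟩ ⟨j, hj, hvj⟩
    have hji : π (e j) = π (e i) := (Finset.mem_filter.1 hj).2
    rw [Finset.filter_filter, ← hji]
    exact (hlocal v (e j) hvj).trans_eq (card_comp fun l ↦ π l = π (e j) ∧ φ v l ≠ 0).symm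

/-- The codeword of the message `v`: the values at the points `(x i, α i * h (x i))` of the
function `∑ k, v.1 k * (y / h) ^ k + v.2 * h * (y / h) ^ t` on `y ^ 2 = f`. -/
noncomputable def evalCode {ι : Type*} (h : F[X]) (α x : ι → F) :
    Message F d t →ₗ[F] ι → F :=
  LinearMap.pi fun i ↦ leval (x i) ∘ₗ repairPolynomial h (α i)

lemma evalCode_apply {ι : Type*} (α x : ι → F) (v : Message F d t) (i : ι) :
    evalCode h α x v i = (repairPolynomial h (α i) v).eval (x i) := rfl

lemma finrank_message : Module.finrank F (Message F d t) = (d + 1) * t + 1 := by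
  have hfinrank : Module.finrank F (degreeLT F (d + 1)) = d + 1 := by
    rw [(degreeLTEquiv F (d + 1)).finrank_eq, Module.finrank_fin_fun]
  have hfinite : Module.Finite F (degreeLT F (d + 1)) :=
    Module.Finite.equiv (degreeLTEquiv F (d + 1)).symm
  rw [Module.finrank_prod, Module.finrank_pi_fintype, Module.finrank_self]
  simp [hfinrank, mul_comm]

variable {ι : Type*} [Fintype ι] {α x : ι → F}

lemma eval_ne_zero_of_isCoprime (hfh : IsCoprime f h) {a b : F}
    (hab : (a * h.eval b) ^ 2 = f.eval b) : h.eval b ≠ 0 := by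
  intro hb
  obtain ⟨u, v, huv⟩ := hfh
  have heval := congrArg (eval b) huv
  rw [eval_add, eval_mul, eval_mul, hb, ← hab, hb] at heval
  simp at heval

lemma card_zeros_evalCode_le [DecidableEq F] (hf : f.natDegree ≤ 2 * d) (hsq : ¬ IsSquare f)
    (hfh : IsCoprime f h) (hd : d ≠ 0) (hh : h.natDegree = d)
    (hpt : ∀ i, (α i * h.eval (x i)) ^ 2 = f.eval (x i))
    (hinj : Function.Injective fun i ↦ (α i, x i)) {v : Message F d t}
    (hv : v ≠ 0) : (Finset.univ.filter fun i ↦ evalCode h α x v i = 0).card ≤ 2 * d * t := by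
  have hh0 (i : ι) : h.eval (x i) ≠ 0 := eval_ne_zero_of_isCoprime hfh (hpt i)
  have hpoint : Function.Injective fun i ↦ (x i, α i * h.eval (x i)) := by
    intro i j hij
    obtain ⟨hx, hy⟩ := Prod.ext_iff.1 hij
    refine hinj (Prod.ext (mul_right_cancel₀ (hh0 i) ?_) hx)
    simpa only [show x i = x j from hx] using hy
  have hnum : codeNumerator f h (fun k ↦ v.1 k) v.2 ≠ 0 := by
    intro hzero
    obtain ⟨hfst, hsnd⟩ := codeNumerator_eq_zero hfh hd hh (natDegree_message_le v) hzero
    exact hv (Prod.ext (funext fun k ↦ Subtype.ext (congrFun hfst k)) hsnd)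
  rw [← Finset.card_map ⟨_, hpoint⟩]
  refine card_zeros_le hf hsq
    (codeNumerator_mem_poleOrderLE hf hh.le (natDegree_message_le v) v.2) hnum fun p hp ↦ ?_
  obtain ⟨i, hi, rfl⟩ := Finset.mem_map.1 hp
  refine ⟨hpt i, (mul_eq_zero.1 ?_).resolve_left (hh0 i)⟩
  rw [mul_evalPoint_codeNumerator, ← evalCode_apply (x := x), (Finset.mem_filter.1 hi).2, mul_zero]

lemma le_card_evalCode_ne_zero [DecidableEq F] (hh : h.natDegree ≤ d)
    (hinj : Function.Injective fun i ↦ (α i, x i))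
    {i : ι} (hfib : (Finset.univ.filter fun j ↦ α j = α i).card = 2 * d)
    (v : Message F d t) (hi : evalCode h α x v i ≠ 0) :
    d ≤ (Finset.univ.filter fun j ↦ α j = α i ∧ evalCode h α x v j ≠ 0).card := by
  have hp0 : repairPolynomial h (α i) v ≠ 0 := by
    intro hzero
    rw [evalCode_apply, hzero, eval_zero] at hi
    exact hi rfl
  have hzeros : (Finset.univ.filter fun j ↦ α j = α i ∧ evalCode h α x v j = 0).card ≤ d := by
    have hinjOn : Set.InjOn x
        (Finset.univ.filter fun j ↦ α j = α i ∧ evalCode h α x v j = 0 : Set ι) := by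
      intro j hj l hl hjl
      simp only [Finset.coe_filter, Finset.mem_univ, true_and, Set.mem_ofPred_eq] at hj hl
      exact hinj (Prod.ext (hj.1.trans hl.1.symm) hjl)
    rw [← Finset.card_image_of_injOn hinjOn]
    refine (card_le_degree_of_subset_roots fun b hb ↦ ?_).trans
      (natDegree_repairPolynomial_le hh (α i) v)
    obtain ⟨j, hj, rfl⟩ := Finset.mem_image.1 hb
    obtain ⟨hji, hj0⟩ := (Finset.mem_filter.1 hj).2
    rw [mem_roots hp0, IsRoot, ← hji, ← evalCode_apply (x := x), hj0]
  have hsplit := Finset.card_filter_add_card_filter_not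
    (s := Finset.univ.filter fun j ↦ α j = α i) (fun j ↦ evalCode h α x v j = 0)
  rw [Finset.filter_filter, Finset.filter_filter, hfib] at hsplit
  lia

lemma exists_repairPolynomial_eq_eval_smul (hh : h.natDegree ≤ d) {g : F[X]} (hg : g.Monic)
    (hgt : g.natDegree = t) : ∃ v : Message F d t,
      v ≠ 0 ∧ ∀ a, repairPolynomial h a v = g.eval a • h := by
  have hmem : h ∈ degreeLT F (d + 1) := by
    rw [degreeLT_succ_eq_degreeLE, mem_degreeLE]
    exact degree_le_of_natDegree_le hh
  refine ⟨(fun k ↦ g.coeff k • ⟨h, hmem⟩, 1), fun hzero ↦ one_ne_zero (Prod.ext_iff.1 hzero).2,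
    fun a ↦ ?_⟩
  have heval : g.eval a = ∑ k : Fin t, a ^ k.val * g.coeff k + a ^ t := by
    refine (congrArg (eval a) hg.as_sum).trans ?_
    rw [hgt, eval_add, eval_pow, eval_X, eval_finsetSum, Finset.sum_range, add_comm]
    congr 1
    exact Finset.sum_congr rfl fun k _ ↦ by rw [eval_mul, eval_C, eval_pow, eval_X, mul_comm]
  rw [repairPolynomial_apply, heval, add_smul, Finset.sum_smul, one_mul]
  simp only [Submodule.coe_smul, smul_smul]

lemma exists_card_evalCode_ne_zero_eq [DecidableEq F] {m : ℕ} (hfh : IsCoprime f h)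
    (hh : h.natDegree ≤ d) (hpt : ∀ i, (α i * h.eval (x i)) ^ 2 = f.eval (x i))
    (hfib : ∀ b ∈ Finset.univ.image α, (Finset.univ.filter fun i ↦ α i = b).card = 2 * d)
    (hm : (Finset.univ.image α).card = m) (htm : t ≤ m) :
    ∃ v : Message F d t, v ≠ 0 ∧
      (Finset.univ.filter fun i ↦ evalCode h α x v i ≠ 0).card = 2 * d * (m - t) := by
  obtain ⟨B, hB, hBt⟩ := Finset.exists_subset_card_eq (htm.trans_eq hm.symm)
  obtain ⟨v, hv, hvB⟩ := exists_repairPolynomial_eq_eval_smul hh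
    (monic_prod_X_sub_C id B) ((natDegree_finsetProd_X_sub_C_eq_card B id).trans hBt)
  have hzero (i : ι) : evalCode h α x v i ≠ 0 ↔ α i ∈ Finset.univ.image α \ B := by
    have hne := eval_ne_zero_of_isCoprime hfh (hpt i)
    simp [evalCode_apply, hvB, eval_prod, Finset.prod_eq_zero_iff, sub_eq_zero, hne]
  refine ⟨v, hv, ?_⟩
  simp only [hzero]
  rw [card_filter_mem_of_card_fiber_eq fun b hb ↦ hfib b (Finset.sdiff_subset hb),
    Finset.card_sdiff_of_subset hB, hm,
    hBt]

lemma singletonOptimal_evalCode {m : ℕ} (hd : d ≠ 0) (htm : t ≤ m) :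
    SingletonOptimal (2 * d * m) ((d + 1) * t + 1) (2 * d * (m - t)) (d + 1) d := by
  have hceil : ((d + 1) * t + 1 + (d + 1) - 1) / (d + 1) = t + 1 := by
    rw [Nat.div_eq_iff (by lia)]
    constructor <;> grind
  rw [SingletonOptimal, hceil]
  push_cast [htm]
  ring

theorem existsOptimalLRC_of_points [DecidableEq F] {m : ℕ} (hf : f.natDegree ≤ 2 * d)
    (hsq : ¬ IsSquare f) (hfh : IsCoprime f h) (hd : d ≠ 0) (hh : h.natDegree = d)
    (hpt : ∀ i, (α i * h.eval (x i)) ^ 2 = f.eval (x i))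
    (hinj : Function.Injective fun i ↦ (α i, x i))
    (hfib : ∀ b ∈ Finset.univ.image α, (Finset.univ.filter fun i ↦ α i = b).card = 2 * d)
    (hm : (Finset.univ.image α).card = m) (htm : t < m) :
    ExistsOptimalLRC F (2 * d * m) ((d + 1) * t + 1) (2 * d * (m - t)) (d + 1) d := by
  have hn : Fintype.card ι = 2 * d * m := by
    simpa [hm] using card_filter_mem_of_card_fiber_eq hfib
  have hgroup (i : ι) : (Finset.univ.filter fun j ↦ α j = α i).card = 2 * d :=
    hfib _ (Finset.mem_image_of_mem α (Finset.mem_univ i))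
  refine existsOptimalLRC_of_linearMap (evalCode h α x) α hn finrank_message ?_ (fun v hv ↦ ?_)
    (exists_card_evalCode_ne_zero_eq hfh hh.le hpt hfib hm htm.le) (fun i ↦ ?_)
    (fun v i ↦ le_card_evalCode_ne_zero hh.le hinj (hgroup i) v)
    (singletonOptimal_evalCode hd htm.le)
  · have : 0 < m - t := by lia
    positivity
  · have hzeros := card_zeros_evalCode_le hf hsq hfh hd hh hpt hinj hv
    have hsplit := Finset.card_filter_add_card_filter_not
      (s := Finset.univ) (fun i ↦ evalCode h α x v i = 0)
    rw [Finset.card_univ, hn] at hsplit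
    rw [Nat.mul_sub]
    lia
  · rw [hgroup]
    lia

theorem existsOptimalLRC_of_splitsCompletely [DecidableEq F] {m : ℕ} (hf : f.natDegree ≤ 2 * d)
    (hsq : ¬ IsSquare f) (hfh : IsCoprime f h) (hd : d ≠ 0) (hh : h.natDegree = d)
    {T : Finset F} (hT : ∀ a ∈ T, SplitsCompletely f h d a) (hmT : m ≤ T.card) (htm : t < m) :
    ExistsOptimalLRC F (2 * d * m) ((d + 1) * t + 1) (2 * d * (m - t)) (d + 1) d := by
  obtain ⟨A, hAT, hAm⟩ := Finset.exists_subset_card_eq hmT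
  choose! R hRcard hR using hT
  let ι := {p : Σ _ : F, F // p ∈ A.sigma R}
  have hmem (i : ι) : i.1.1 ∈ A ∧ i.1.2 ∈ R i.1.1 := Finset.mem_sigma.1 i.2
  refine existsOptimalLRC_of_points (ι := ι) (α := fun i ↦ i.1.1) (x := fun i ↦ i.1.2) hf hsq hfh
    hd hh (fun i ↦ hR _ (hAT (hmem i).1) _ (hmem i).2) (fun i j hij ↦ ?_) (fun b hb ↦ ?_) ?_ htm
  · obtain ⟨hα, hx⟩ := Prod.ext_iff.1 hij
    exact Subtype.ext (Sigma.ext hα (heq_of_eq hx))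
  · obtain ⟨i, -, rfl⟩ := Finset.mem_image.1 hb
    rw [← hRcard _ (hAT (hmem i).1)]
    refine Finset.card_nbij (fun j ↦ j.1.2) (fun j hj ↦ ?_) (fun j hj l hl hjl ↦ ?_) fun b hb ↦ ?_
    · rw [← (Finset.mem_filter.1 hj).2]
      exact (hmem j).2
    · simp only [Finset.coe_filter, Finset.mem_univ, true_and, Set.mem_ofPred_eq] at hj hl
      exact Subtype.ext (Sigma.ext (hj.trans hl.symm) (heq_of_eq hjl))
    · exact ⟨⟨⟨i.1.1, b⟩, Finset.mem_sigma.2 ⟨(hmem i).1, hb⟩⟩, by simp, rfl⟩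
  · rw [← hAm]
    congr 1
    refine Finset.Subset.antisymm (fun a ha ↦ ?_) fun a ha ↦ ?_
    · obtain ⟨i, -, rfl⟩ := Finset.mem_image.1 ha
      exact (hmem i).1
    · have hpos : 0 < (R a).card := by
        rw [hRcard a (hAT ha)]
        positivity
      obtain ⟨b, hb⟩ := Finset.card_pos.1 hpos
      exact Finset.mem_image.2 ⟨⟨⟨a, b⟩, Finset.mem_sigma.2 ⟨ha, hb⟩⟩, Finset.mem_univ _, rfl⟩

end Code

theorem existsOptimalLRC_of_card_eq_sq {F : Type*} [Field F] [Fintype F] [DecidableEq F]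
    {P t m : ℕ} (hcard : Fintype.card F = P ^ 2) (hP : P % 8 = 5 ∨ P % 8 = 7) (htm : t < m)
    (hm : 6 * m + 19 < Fintype.card F + 4 * P) :
    ExistsOptimalLRC F (6 * m) (4 * t + 1) (6 * (m - t)) 4 3 := by
  obtain ⟨f, hdeg, hcop, hsq, T, hT, hTcard⟩ := exists_card_splitsCompletely hcard hP
  have hh : (X ^ 3 + 1 : F[X]).natDegree = 3 := by compute_degree!
  exact existsOptimalLRC_of_splitsCompletely (d := 3) hdeg.le hsq hcop three_ne_zero hh hT
    (by lia) htm

lemma pow_mod_eight_of_odd {Q s : ℕ} (hQ : Odd Q) (hs : Odd s) : Q ^ s % 8 = Q % 8 := by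
  obtain ⟨k, rfl⟩ := hs
  have hQ8 : Q % 8 = 1 ∨ Q % 8 = 3 ∨ Q % 8 = 5 ∨ Q % 8 = 7 := by grind
  have hsq : Q ^ 2 % 8 = 1 := by rcases hQ8 with h | h | h | h <;> rw [Nat.pow_mod, h]
  rw [pow_succ, pow_mul, Nat.mul_mod, Nat.pow_mod, hsq, one_pow, Nat.one_mod, one_mul, Nat.mod_mod]

theorem stmt_8_general (Q : ℕ) (hQ : Q % 8 = 5 ∨ Q % 8 = 7) (s : ℕ) (hs : Odd s) (q : ℕ)
    (hq : q = Q ^ (2 * s)) (t m : ℕ) (htm : t < m)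
    (hm : (m : ℤ) ≤ 2 * ⌈((q : ℚ) + 4 * (Q : ℚ) ^ s - 25) / 12⌉ - 1)
    (F : Type*) [Field F] [Fintype F] [DecidableEq F] (hF : Fintype.card F = q) :
    ExistsOptimalLRC F (6 * m) (4 * t + 1) (6 * (m - t)) 4 3 := by
  have hcard : Fintype.card F = (Q ^ s) ^ 2 := by rw [hF, hq, ← pow_mul, mul_comm]
  refine existsOptimalLRC_of_card_eq_sq hcard (by rwa [pow_mod_eight_of_odd (by grind) hs]) htm ?_
  have hceil := Int.ceil_lt_add_one (((q : ℚ) + 4 * (Q : ℚ) ^ s - 25) / 12)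
  have hmℚ : (m : ℚ) ≤ 2 * (⌈((q : ℚ) + 4 * (Q : ℚ) ^ s - 25) / 12⌉ : ℚ) - 1 := mod_cast hm
  have hbound : 6 * (m : ℚ) + 19 < q + 4 * (Q : ℚ) ^ s := by linarith
  rw [hF]
  exact_mod_cast hbound

/-- For a prime power `Q ≠ 5` with `Q ≡ 5, 15, 21, 23 (mod 24)`,
odd `s`, and `q = Q^(2s)`, for all `1 ≤ t < m ≤ 2⌈(q + 4Q^s - 25)/12⌉ - 1`, there
exists an optimal `(4, 3)`-LRC with parameters `[6m, 4t + 1, 6(m-t)]_q`. -/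
theorem stmt_8 (Q : ℕ) (hQ : IsPrimePow Q) (hQ5 : Q ≠ 5)
    (hQmod : Q % 24 = 5 ∨ Q % 24 = 15 ∨ Q % 24 = 21 ∨ Q % 24 = 23)
    (s : ℕ) (hs : 0 < s) (hsodd : Odd s) (q : ℕ) (hq : q = Q ^ (2 * s))
    (t m : ℕ) (ht : 1 ≤ t) (htm : t < m)
    (hm : (m : ℤ) ≤ 2 * ⌈((q : ℚ) + 4 * (Q : ℚ) ^ s - 25) / 12⌉ - 1)
    (F : Type*) [Field F] [Fintype F] [DecidableEq F] (hF : Fintype.card F = q) :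
    ExistsOptimalLRC F (6 * m) (4 * t + 1) (6 * (m - t)) 4 3 :=
  stmt_8_general Q (by lia) s hsodd q hq t m htm hm F hF
end

section
/- Let g ≥ 2 be an integer such that 2g+1 is a prime power, let s be a positive integer, and let q = (2g+1)^{2s}. Let g' be an integer with −(g−1) ≤ g' ≤ g−1, set r = g+1−g' and δ = g+1+g'. Then for all integers t, m with 1 ≤ t < m ≤ ⌊(q + 2g(2g+1)^{s})/(2g+1)⌋, there exists an (r, δ)-LRC over F_q of length m(2g+1), dimension tr+1, and minimum distance at least (m−t)(2g+1) + min{0, 2g'+1}. In particular, if 0 ≤ g' ≤ g−1, there exists an optimal (r, δ)-LRC over F_q with parameters [m(2g+1), tr+1, (m−t)(2g+1)]_q. -/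
/-!
Put `l = 2 * g + 1`, `Q = l ^ s`, and choose `c ≠ 0` with `c ^ Q = -c`. The points of the code lie
on the curve `c * y ^ 2 = x ^ l - x` over the field with `Q ^ 2` elements. As `x ↦ x ^ l - x` is
additive with kernel of order `l`, every horizontal line `y = b` with `c * b ^ 2` in its image meets
the curve in `l` rational points. These lines are the repair groups: on each of them a combination
of monomials `x ^ i * y ^ j` with `i < r` is a polynomial in `x` of degree less than `r`.

On a curve `y ^ 2 = L(x)` every polynomial function has the form `A(x) + y * B(x)` and has at most
`deg (A ^ 2 - L * B ^ 2)` zeros, since the norm `A ^ 2 - L * B ^ 2` vanishes to order at least the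
number of zeros above each `x`, and is nonzero because `deg L` is odd.

The admissible `b` are bounded from below by splitting the field into the eigenspaces of
`x ↦ x ^ Q` for `1` and `-1`: the second eigenspace is contained in the image of `x ↦ x ^ l - x`.
-/

open Polynomial

section ArtinSchreier

variable (F : Type*) [Field F] (p k : ℕ) [Fact p.Prime] [CharP F p]

/-- The additive map `x ↦ x ^ (p ^ k) - x` of a field of characteristic `p`. -/
noncomputable def artinSchreierMap : F →+ F :=
  (iterateFrobenius F p k : F →+ F) - AddMonoidHom.id F

variable {F p k}

theorem artinSchreierMap_apply (x : F) : artinSchreierMap F p k x = x ^ p ^ k - x := rfl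

theorem mem_ker_artinSchreierMap {x : F} : x ∈ (artinSchreierMap F p k).ker ↔ x ^ p ^ k = x := by
  rw [AddMonoidHom.mem_ker, artinSchreierMap_apply, sub_eq_zero]

theorem natCard_ker_artinSchreierMap {j : ℕ} (hF : Nat.card F = (p ^ k) ^ j) :
    Nat.card (artinSchreierMap F p k).ker = p ^ k := by
  classical
  have : Finite F := Nat.finite_of_card_ne_zero (hF ▸ by simp [(Fact.out : p.Prime).ne_zero])
  have hcard := Finite.one_lt_card (α := F)
  have hk : k ≠ 0 := by rintro rfl; simp only [hF, pow_zero, one_pow, lt_irrefl] at hcard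
  have := Fintype.ofFinite F
  have hq : 1 < p ^ k := Nat.one_lt_pow hk (Fact.out : p.Prime).one_lt
  set P : F[X] := X ^ p ^ k - X
  set R : F[X] := X ^ Nat.card F - X
  have hP : P ≠ 0 := FiniteField.X_pow_card_sub_X_ne_zero F hq
  have hR : R ≠ 0 := FiniteField.X_pow_card_sub_X_ne_zero F hcard
  have hdvd : P ∣ R := by
    simp only [P, R, hF, ← pow_mul]
    exact dvd_pow_pow_sub_self_of_dvd (dvd_mul_right k j)
  have hsplits : P.Splits := splits_X_pow_nat_card_sub_X.of_dvd hR hdvd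
  have hnodup : P.roots.Nodup := by
    refine Multiset.nodup_of_le (roots.le_of_dvd hR hdvd) ?_
    rw [show R.roots = Finset.univ.val by
      simp only [R, Nat.card_eq_fintype_card, FiniteField.roots_X_pow_card_sub_X]]
    exact Finset.univ.nodup
  have hker : ((artinSchreierMap F p k).ker : Set F) = P.roots.toFinset := by
    ext x
    simp [mem_ker_artinSchreierMap, -AddMonoidHom.mem_ker, hP, P, sub_eq_zero]
  calc Nat.card (artinSchreierMap F p k).ker
      = P.roots.toFinset.card := by
        rw [← SetLike.coe_sort_coe, hker, Nat.card_coe_set_eq, Set.ncard_coe_finset]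
    _ = P.natDegree := by
        rw [Multiset.toFinset_card_of_nodup hnodup, hsplits.natDegree_eq_card_roots]
    _ = p ^ k := FiniteField.X_pow_card_sub_X_natDegree_eq F hq

theorem natCard_range_artinSchreierMap {j : ℕ} (hF : Nat.card F = (p ^ k) ^ (j + 1)) :
    Nat.card (artinSchreierMap F p k).range = (p ^ k) ^ j := by
  have h := (artinSchreierMap F p k).ker.card_mul_index
  rw [AddSubgroup.index_ker, natCard_ker_artinSchreierMap hF, hF, pow_succ'] at h
  exact Nat.eq_of_mul_eq_mul_left (pow_pos (Fact.out : p.Prime).pos k) h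

theorem card_artinSchreierMap_fiber [Fintype F] [DecidableEq F] {j : ℕ}
    (hF : Nat.card F = (p ^ k) ^ j) {w : F} (hw : w ∈ (artinSchreierMap F p k).range) :
    (Finset.univ.filter fun x => artinSchreierMap F p k x = w).card = p ^ k := by
  rw [AddMonoidHom.card_fiber_eq_of_mem_range _ hw ⟨0, map_zero _⟩,
    ← natCard_ker_artinSchreierMap hF, Nat.card_eq_fintype_card, Fintype.card_subtype]
  simp only [AddMonoidHom.mem_ker]

theorem mem_range_artinSchreierMap_of_pow_eq_neg [Finite F] (hp : p ≠ 2) {s : ℕ} {w : F}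
    (hw : w ^ (p ^ k) ^ s = -w) : w ∈ (artinSchreierMap F p k).range := by
  set W : Set F := {x | x ^ (p ^ k) ^ s = -x}
  have hchar : ringChar F ≠ 2 := by rwa [ringChar.eq F p]
  have hpow_sub (x y : F) : (x - y) ^ (p ^ k) ^ s = x ^ (p ^ k) ^ s - y ^ (p ^ k) ^ s := by
    simp only [← pow_mul, sub_pow_char_pow]
  have hmaps : Set.MapsTo (artinSchreierMap F p k) W W := fun x (hx : _ = _) => by
    have hodd : Odd (p ^ k) := ((Fact.out : p.Prime).odd_of_ne_two hp).pow
    change _ = _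
    rw [artinSchreierMap_apply, hpow_sub, pow_right_comm, hx, hodd.neg_pow]
    ring
  have hinj : Set.InjOn (artinSchreierMap F p k) W := fun x (hx : _ = _) y (hy : _ = _) hxy => by
    have hfix : (x - y) ^ p ^ k = x - y := by
      rw [← mem_ker_artinSchreierMap, AddMonoidHom.mem_ker, map_sub, hxy, sub_self]
    have hfix' : (x - y) ^ (p ^ k) ^ s = x - y := by
      have := Function.IsFixedPt.iterate (f := fun z : F => z ^ p ^ k) hfix s
      rwa [pow_iterate] at this
    rw [hpow_sub, hx, hy] at hfix'
    have htwo : 2 * (x - y) = 0 := by linear_combination -hfix'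
    exact sub_eq_zero.1 ((mul_eq_zero.1 htwo).resolve_left (Ring.two_ne_zero hchar))
  obtain ⟨x, -, hx⟩ := ((W.toFinite.injOn_iff_bijOn_of_mapsTo hmaps).1 hinj).surjOn hw
  exact ⟨x, hx⟩

theorem map_mem_range_artinSchreierMap {E : Type*} [Field E] [CharP E p] (f : F →+* E) {w : F}
    (hw : w ∈ (artinSchreierMap F p k).range) : f w ∈ (artinSchreierMap E p k).range := by
  obtain ⟨x, rfl⟩ := hw
  exact ⟨f x, by simp only [artinSchreierMap_apply, map_sub, map_pow]⟩

end ArtinSchreier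

theorem natCard_setOf_mul_mem {K : Type*} [Field K] [Finite K] (H : AddSubgroup K) :
    Nat.card {a : K × K // a.1 * a.2 ∈ H} = Nat.card K + (Nat.card K - 1) * Nat.card H := by
  classical
  have := Fintype.ofFinite K
  have hfiber (u : K) : Nat.card {v : K // u * v ∈ H} =
      if u = 0 then Nat.card K else Nat.card H := by
    split_ifs with hu
    · simp only [hu, zero_mul, H.zero_mem, Nat.card_congr (Equiv.subtypeUnivEquiv fun _ => trivial)]
    · exact Nat.card_congr ((Equiv.mulLeft₀ u hu).subtypeEquiv fun _ => Iff.rfl)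
  calc Nat.card {a : K × K // a.1 * a.2 ∈ H}
      = ∑ u : K, Nat.card {v : K // u * v ∈ H} := by
        rw [← Nat.card_sigma]
        exact Nat.card_congr (Equiv.subtypeProdEquivSigmaSubtype fun u v : K => u * v ∈ H)
    _ = Nat.card K + ∑ _ ∈ ({0}ᶜ : Finset K), Nat.card H := by
        rw [Fintype.sum_eq_add_sum_compl 0, hfiber, if_pos rfl]
        refine congrArg _ (Finset.sum_congr rfl fun u hu => ?_)
        rw [hfiber, if_neg (by simpa using hu)]
    _ = Nat.card K + (Nat.card K - 1) * Nat.card H := by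
        rw [Finset.sum_const, Finset.card_compl, Finset.card_singleton, smul_eq_mul,
          Nat.card_eq_fintype_card (α := K)]

section Involution

variable {F : Type*} [Field F] [Finite F] {p k s : ℕ} [Fact p.Prime] [CharP F p]

-- Write `b = u + v / (2 * c)` with `u, v ∈ K`.  The cross term of `c * b ^ 2` is `u * v`, and the
-- other terms are negated by `x ↦ x ^ Nat.card K`, hence lie in the range.
theorem le_ncard_setOf_mul_sq_mem_range {K : Type*} [Field K] [Finite K] [CharP K p] [Algebra K F]
    (hp : p ≠ 2) (hK : Nat.card K = (p ^ k) ^ s) {c : F} (hc : c ≠ 0) (hcK : c ^ Nat.card K = -c) :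
    Nat.card K + (Nat.card K - 1) * Nat.card (artinSchreierMap K p k).range ≤
      {b : F | c * b ^ 2 ∈ (artinSchreierMap F p k).range}.ncard := by
  have htwo : (2 : F) ≠ 0 := Ring.two_ne_zero (by rwa [ringChar.eq F p])
  have := Fintype.ofFinite K
  have hfix (u : K) : algebraMap K F u ^ Nat.card K = algebraMap K F u := by
    rw [← map_pow, Nat.card_eq_fintype_card, FiniteField.pow_card]
  have hadd (x y : F) : (x + y) ^ Nat.card K = x ^ Nat.card K + y ^ Nat.card K := by
    simp only [hK, ← pow_mul, add_pow_char_pow]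
  have htwoK : (2 : F) ^ Nat.card K = 2 := by simpa only [map_ofNat] using hfix 2
  let b (a : K × K) : F := algebraMap K F a.1 + algebraMap K F a.2 / (2 * c)
  have hb (a : K × K) : b a ^ Nat.card K = algebraMap K F a.1 - algebraMap K F a.2 / (2 * c) := by
    simp only [b, hadd, div_pow, mul_pow, hfix, hcK, htwoK, mul_neg, div_neg, sub_eq_add_neg]
  rw [← natCard_setOf_mul_mem, ← Set.coe_ofPred, Nat.card_coe_set_eq]
  refine Set.ncard_le_ncard_of_injOn b (fun a ha => ?_) fun a _ a' _ haa' => ?_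
  · have hanti : c * (algebraMap K F a.1 ^ 2 + (algebraMap K F a.2 / (2 * c)) ^ 2) ∈
        (artinSchreierMap F p k).range := by
      refine mem_range_artinSchreierMap_of_pow_eq_neg hp (s := s) ?_
      rw [← hK]
      simp only [mul_pow, hadd, div_pow, pow_right_comm _ 2, hfix, hcK, htwoK]
      ring
    have hcross := map_mem_range_artinSchreierMap (algebraMap K F) ha
    have hsq : c * b a ^ 2 = c * (algebraMap K F a.1 ^ 2 + (algebraMap K F a.2 / (2 * c)) ^ 2) +
        algebraMap K F (a.1 * a.2) := by
      simp only [b, map_mul]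
      field_simp
      ring
    rw [Set.mem_ofPred_eq, hsq]
    exact add_mem hanti hcross
  · have hconj := congrArg (· ^ Nat.card K) haa'
    simp only [hb] at hconj
    have hfst : 2 * algebraMap K F a.1 = 2 * algebraMap K F a'.1 := by
      linear_combination haa' + hconj
    have hfst' := mul_left_cancel₀ htwo hfst
    have hsnd : algebraMap K F a.2 / (2 * c) = algebraMap K F a'.2 / (2 * c) := by
      linear_combination haa' - hfst'
    rw [div_left_inj' (mul_ne_zero htwo hc)] at hsnd
    exact Prod.ext ((algebraMap K F).injective hfst') ((algebraMap K F).injective hsnd)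

theorem exists_pow_eq_neg {n : ℕ} (hF : Nat.card F = (p ^ n) ^ 2) :
    ∃ c : F, c ≠ 0 ∧ c ^ p ^ n = -c := by
  have := Fintype.ofFinite F
  obtain ⟨x, hx⟩ : ∃ x : F, x ∉ (artinSchreierMap F p n).ker := by
    by_contra! h
    have htop : (artinSchreierMap F p n).ker = ⊤ := eq_top_iff.2 fun x _ => h x
    have hcard := natCard_ker_artinSchreierMap hF
    have hone := Finite.one_lt_card (α := F)
    rw [htop, AddSubgroup.card_top, hF] at hcard
    rw [hF] at hone
    nlinarith
  refine ⟨x ^ p ^ n - x, by rwa [mem_ker_artinSchreierMap, ← sub_eq_zero] at hx, ?_⟩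
  rw [sub_pow_char_pow, ← pow_mul, ← sq, ← hF, Nat.card_eq_fintype_card, FiniteField.pow_card,
    neg_sub]

theorem exists_le_ncard_setOf_mul_sq_mem_range (hp : p ≠ 2) (hF : Nat.card F = (p ^ k) ^ (2 * s))
    (hs : s ≠ 0) :
    ∃ c : F, c ≠ 0 ∧ (p ^ k) ^ s + ((p ^ k) ^ s - 1) * (p ^ k) ^ (s - 1) ≤
      {b : F | c * b ^ 2 ∈ (artinSchreierMap F p k).range}.ncard := by
  have hF' : Nat.card F = (p ^ (k * s)) ^ 2 := by rw [hF]; ring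
  obtain ⟨c, hc, hcQ⟩ := exists_pow_eq_neg hF'
  let K : Subfield F := (iterateFrobenius F p (k * s)).eqLocusField (RingHom.id F)
  have hK : Nat.card K = (p ^ k) ^ s := by
    rw [← pow_mul, ← natCard_ker_artinSchreierMap hF']
    refine Nat.card_congr (Equiv.subtypeEquivRight fun x => ?_)
    rw [mem_ker_artinSchreierMap, RingHom.mem_eqLocusField, iterateFrobenius_def, RingHom.id_apply]
  have hrange : Nat.card (artinSchreierMap K p k).range = (p ^ k) ^ (s - 1) :=
    natCard_range_artinSchreierMap (by rw [hK, Nat.sub_add_cancel (Nat.pos_of_ne_zero hs)])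
  refine ⟨c, hc, ?_⟩
  rw [← hK, ← hrange]
  exact le_ncard_setOf_mul_sq_mem_range hp hK hc (by rw [hK, ← pow_mul, hcQ])

end Involution

section Norm

variable {F : Type*} [Field F] {L A B : F[X]}

theorem sq_sub_mul_sq_ne_zero_of_odd_natDegree (hL : Odd L.natDegree) (hAB : ¬(A = 0 ∧ B = 0)) :
    A ^ 2 - L * B ^ 2 ≠ 0 := by
  have hL0 : L ≠ 0 := by rintro rfl; simp at hL
  intro h
  rw [sub_eq_zero] at h
  rcases eq_or_ne B 0 with rfl | hB
  · exact hAB ⟨by simpa using h, rfl⟩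
  · have hdeg := congrArg natDegree h
    rw [natDegree_pow, natDegree_mul hL0 (pow_ne_zero 2 hB), natDegree_pow] at hdeg
    have hodd : Odd (L.natDegree + 2 * B.natDegree) := hL.add_even (even_two_mul _)
    exact Nat.not_even_iff_odd.2 hodd (hdeg ▸ even_two_mul _)

theorem natDegree_sq_sub_mul_sq_le {D : ℕ} (hA : 2 * A.natDegree ≤ D)
    (hB : B ≠ 0 → 2 * B.natDegree + L.natDegree ≤ D) : (A ^ 2 - L * B ^ 2).natDegree ≤ D := by
  refine (natDegree_sub_le _ _).trans (max_le (natDegree_pow_le.trans hA) ?_)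
  rcases eq_or_ne B 0 with rfl | hB0
  · simp
  · have := hB hB0
    have hmul := natDegree_mul_le (p := L) (q := B ^ 2)
    rw [natDegree_pow] at hmul
    omega

theorem pow_card_dvd_sq_sub_mul_sq {a : F} {Y : Finset F}
    (hY : ∀ b ∈ Y, b ^ 2 = L.eval a ∧ A.eval a + b * B.eval a = 0) :
    (X - C a) ^ Y.card ∣ A ^ 2 - L * B ^ 2 := by
  rcases Y.eq_empty_or_nonempty with rfl | ⟨b, hb⟩
  · simp
  obtain ⟨hbL, hbAB⟩ := hY b hb
  by_cases hcard : Y.card ≤ 1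
  · refine (pow_dvd_pow _ hcard).trans ?_
    rw [pow_one, dvd_iff_isRoot, IsRoot]
    simp only [eval_sub, eval_pow, eval_mul, ← hbL]
    linear_combination (A.eval a - b * B.eval a) * hbAB
  · obtain ⟨b', hb', hne⟩ := Finset.exists_mem_ne (not_le.1 hcard) b
    have hcard_le : Y.card ≤ 2 := by
      classical
      refine (Finset.card_le_card fun d hd => ?_).trans (Finset.card_le_two (a := b) (b := -b))
      simpa using sq_eq_sq_iff_eq_or_eq_neg.1 ((hY d hd).1.trans hbL.symm)
    have hBa : B.eval a = 0 := by
      have hmul : (b - b') * B.eval a = 0 := by linear_combination hbAB - (hY b' hb').2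
      exact (mul_eq_zero.1 hmul).resolve_left (sub_ne_zero.2 hne.symm)
    have hAa : A.eval a = 0 := by simpa [hBa] using hbAB
    refine (pow_dvd_pow _ hcard_le).trans (dvd_sub ?_ (Dvd.dvd.mul_left ?_ _))
    · exact pow_dvd_pow_of_dvd (dvd_iff_isRoot.2 hAa) 2
    · exact pow_dvd_pow_of_dvd (dvd_iff_isRoot.2 hBa) 2

theorem card_le_natDegree_sq_sub_mul_sq {Z : Finset (F × F)} (hN : A ^ 2 - L * B ^ 2 ≠ 0)
    (hZ : ∀ z ∈ Z, z.2 ^ 2 = L.eval z.1 ∧ A.eval z.1 + z.2 * B.eval z.1 = 0) :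
    Z.card ≤ (A ^ 2 - L * B ^ 2).natDegree := by
  classical
  set N := A ^ 2 - L * B ^ 2
  have hfiber (a : F) : (Z.filter (·.1 = a)).card ≤ N.roots.count a := by
    have hinj : Set.InjOn Prod.snd (Z.filter (·.1 = a) : Set (F × F)) := by
      intro z hz w hw hzw
      simp only [Finset.coe_filter, Set.mem_ofPred_eq] at hz hw
      exact Prod.ext (hz.2.trans hw.2.symm) hzw
    rw [count_roots, ← Finset.card_image_of_injOn hinj, le_rootMultiplicity_iff hN]
    refine pow_card_dvd_sq_sub_mul_sq fun b hb => ?_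
    obtain ⟨z, hz, rfl⟩ := Finset.mem_image.1 hb
    obtain ⟨hzZ, rfl⟩ := Finset.mem_filter.1 hz
    exact hZ z hzZ
  calc Z.card = ∑ a ∈ Z.image Prod.fst, (Z.filter (·.1 = a)).card :=
        Finset.card_eq_sum_card_image _ _
    _ ≤ ∑ a ∈ Z.image Prod.fst, N.roots.count a := Finset.sum_le_sum fun a _ => hfiber a
    _ ≤ ∑ a ∈ Z.image Prod.fst ∪ N.roots.toFinset, N.roots.count a :=
        Finset.sum_le_sum_of_subset Finset.subset_union_left
    _ = N.roots.card := Multiset.sum_count_eq_card fun a ha =>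
        Finset.mem_union_right _ (Multiset.mem_toFinset.2 ha)
    _ ≤ N.natDegree := card_roots' N

end Norm

theorem eq_zero_of_evalEval_eq_zero {R : Type*} [CommRing R] [IsDomain R] {l : ℕ} {f : R[X][X]}
    {T : Finset R} (hf : f.degree < T.card) (hcoeff : ∀ j, (f.coeff j).degree < l)
    (hzero : ∀ b ∈ T, ∃ A : Finset R, l ≤ A.card ∧ ∀ a ∈ A, f.evalEval a b = 0) : f = 0 := by
  classical
  have hline (b : R) (hb : b ∈ T) : f.eval (C b) = 0 := by
    obtain ⟨A, hA, hAzero⟩ := hzero b hb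
    refine eq_zero_of_degree_lt_of_eval_finset_eq_zero A ?_ hAzero
    refine lt_of_lt_of_le (mem_degreeLT.1 ?_) (Nat.cast_le.2 hA)
    rw [eval_eq_sum_range]
    refine Submodule.sum_mem _ fun j _ => ?_
    rw [← C_pow, mul_comm, ← smul_eq_C_mul]
    exact Submodule.smul_mem _ _ (mem_degreeLT.2 (hcoeff j))
  refine eq_zero_of_degree_lt_of_eval_finset_eq_zero (T.image C) ?_ fun p hp => ?_
  · rwa [Finset.card_image_of_injective _ C_injective]
  · obtain ⟨b, hb, rfl⟩ := Finset.mem_image.1 hp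
    exact hline b hb

theorem coeff_coeff_sum_monomial_monomial {R : Type*} [Semiring R] (S : Finset (ℕ × ℕ))
    (a : ℕ × ℕ → R) (e : ℕ × ℕ) :
    ((∑ d ∈ S, monomial d.2 (monomial d.1 (a d)) : R[X][X]).coeff e.2).coeff e.1 =
      if e ∈ S then a e else 0 := by
  rw [finsetSum_coeff, finsetSum_coeff, ← Finset.sum_ite_eq' S e a]
  refine Finset.sum_congr rfl fun d _ => ?_
  rw [coeff_monomial, apply_ite (coeff · e.1), coeff_monomial, coeff_zero, ← ite_and]
  exact if_congr (by rw [Prod.ext_iff, and_comm]) rfl rfl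

theorem injOn_fiber_of_injective {ι α β : Type*} [Fintype ι] [DecidableEq β] {x : ι → α} {y : ι → β}
    (hxy : Function.Injective fun i => (x i, y i)) (b : β) :
    Set.InjOn x (Finset.univ.filter (y · = b) : Finset ι) := fun j hj k hk hjk => by
  simp only [Finset.coe_filter_univ, Set.mem_ofPred_eq] at hj hk
  exact hxy (Prod.ext hjk (hj.trans hk.symm))

section MonomialCode

variable {ι F : Type*} [Field F]

/-- The evaluation code spanned by the words `(x i ^ a * y i ^ b)ᵢ` with `(a, b) ∈ S`, for points
`(x i, y i)` of the affine plane. -/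
def monomialCode (x y : ι → F) (S : Finset (ℕ × ℕ)) : Submodule F (ι → F) :=
  Submodule.span F ((fun e : ℕ × ℕ => x ^ e.1 * y ^ e.2) '' S)

variable {x y c : ι → F} {S : Finset (ℕ × ℕ)}

theorem mem_monomialCode : c ∈ monomialCode x y S ↔
    ∃ a : ℕ × ℕ → F, ∀ i, ∑ e ∈ S, a e * (x i ^ e.1 * y i ^ e.2) = c i := by
  rw [monomialCode, Submodule.mem_span_image_finset_iff_exists_fun']
  simp [funext_iff]

theorem exists_eval_eq_of_mem_monomialCode {r : ℕ} (hS : ∀ e ∈ S, e.1 < r)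
    (hc : c ∈ monomialCode x y S) (b : F) :
    ∃ G ∈ degreeLT F r, ∀ i, y i = b → c i = G.eval (x i) := by
  obtain ⟨a, ha⟩ := mem_monomialCode.1 hc
  refine ⟨∑ e ∈ S, monomial e.1 (a e * b ^ e.2), Submodule.sum_mem _ fun e he => ?_, ?_⟩
  · exact mem_degreeLT.2 ((degree_monomial_le _ _).trans_lt (Nat.cast_lt.2 (hS e he)))
  · rintro i rfl
    rw [← ha, eval_finsetSum]
    refine Finset.sum_congr rfl fun e _ => ?_
    rw [eval_monomial]
    ring

-- The even powers of `y` contribute to `A` and the odd ones to `B`.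
theorem exists_eval_add_mul_eval_eq_of_mem_monomialCode {L : F[X]} {D : ℕ}
    (hL : ∀ i, y i ^ 2 = L.eval (x i)) (hS : ∀ e ∈ S, 2 * e.1 + L.natDegree * e.2 ≤ D)
    (hc : c ∈ monomialCode x y S) :
    ∃ A B : F[X], 2 * A.natDegree ≤ D ∧ (B ≠ 0 → 2 * B.natDegree + L.natDegree ≤ D) ∧
      ∀ i, c i = A.eval (x i) + y i * B.eval (x i) := by
  obtain ⟨a, ha⟩ := mem_monomialCode.1 hc
  let term (e : ℕ × ℕ) : F[X] := monomial e.1 (a e) * L ^ (e.2 / 2)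
  have hterm (e) (he : e ∈ S) : 2 * (term e).natDegree + L.natDegree * (e.2 % 2) ≤ D := by
    have hdeg : (term e).natDegree ≤ e.1 + e.2 / 2 * L.natDegree :=
      natDegree_mul_le.trans (add_le_add (natDegree_monomial_le _) natDegree_pow_le)
    have hD := hS e he
    rw [← Nat.div_add_mod e.2 2] at hD
    linarith
  have heval (i : ι) (e : ℕ × ℕ) :
      a e * (x i ^ e.1 * y i ^ e.2) = y i ^ (e.2 % 2) * (term e).eval (x i) := by
    conv_lhs => rw [← Nat.div_add_mod e.2 2, pow_add, pow_mul, hL]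
    rw [eval_mul, eval_monomial, eval_pow]
    ring
  refine ⟨∑ e ∈ S with Even e.2, term e, ∑ e ∈ S with ¬Even e.2, term e, ?_, fun hB => ?_,
    fun i => ?_⟩
  · suffices h : (∑ e ∈ S with Even e.2, term e).natDegree ≤ D / 2 by omega
    refine natDegree_sum_le_of_forall_le _ _ fun e he => ?_
    have := hterm e (Finset.mem_filter.1 he).1
    omega
  · have hodd {e : ℕ × ℕ} (he : e ∈ S.filter (¬Even ·.2)) :
        2 * (term e).natDegree + L.natDegree ≤ D := by
      obtain ⟨heS, heodd⟩ := Finset.mem_filter.1 he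
      simpa only [Nat.not_even_iff.1 heodd, mul_one] using hterm e heS
    obtain ⟨e₀, he₀, -⟩ := Finset.exists_ne_zero_of_sum_ne_zero hB
    suffices h : (∑ e ∈ S with ¬Even e.2, term e).natDegree ≤ (D - L.natDegree) / 2 by
      have := hodd he₀
      omega
    refine natDegree_sum_le_of_forall_le _ _ fun e he => ?_
    have := hodd he
    omega
  · rw [← ha, ← Finset.sum_filter_add_sum_filter_not S (Even ·.2), eval_finsetSum, eval_finsetSum,
      Finset.mul_sum]
    congr 1 <;> refine Finset.sum_congr rfl fun e he => ?_
    · rw [heval, Nat.even_iff.1 (Finset.mem_filter.1 he).2, pow_zero, one_mul]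
    · rw [heval, Nat.not_even_iff.1 (Finset.mem_filter.1 he).2, pow_one]

section Parameters

variable [Fintype ι] [DecidableEq F] {l : ℕ}

theorem linearIndepOn_pow_mul_pow (hxy : Function.Injective fun i => (x i, y i))
    (hfib : ∀ i, l ≤ (Finset.univ.filter (y · = y i)).card)
    (hS : ∀ e ∈ S, e.1 < l ∧ e.2 < (Finset.univ.image y).card) :
    LinearIndepOn F (fun e : ℕ × ℕ => x ^ e.1 * y ^ e.2) (S : Set (ℕ × ℕ)) := by
  rw [linearIndepOn_finset_iff]
  intro a ha e he
  let f : F[X][X] := ∑ d ∈ S, monomial d.2 (monomial d.1 (a d))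
  have hdeg : f.degree < (Finset.univ.image y).card := by
    rw [← mem_degreeLT]
    exact Submodule.sum_mem _ fun d hd => mem_degreeLT.2 <|
      (degree_monomial_le _ _).trans_lt (Nat.cast_lt.2 (hS d hd).2)
  have hcoeff (j : ℕ) : (f.coeff j).degree < l := by
    rw [← mem_degreeLT, finsetSum_coeff]
    refine Submodule.sum_mem _ fun d hd => ?_
    rw [coeff_monomial]
    split_ifs
    · exact mem_degreeLT.2 ((degree_monomial_le _ _).trans_lt (Nat.cast_lt.2 (hS d hd).1))
    · exact zero_mem _
  have hzero (i : ι) : f.evalEval (x i) (y i) = 0 := by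
    refine Eq.trans ?_ (congrFun ha i)
    simp [f, evalEval, eval_finsetSum, mul_assoc]
  have hf : f = 0 := by
    refine eq_zero_of_evalEval_eq_zero hdeg hcoeff fun b hb => ?_
    obtain ⟨i, -, rfl⟩ := Finset.mem_image.1 hb
    refine ⟨(Finset.univ.filter (y · = y i)).image x, ?_, fun a ha => ?_⟩
    · rw [Finset.card_image_of_injOn (injOn_fiber_of_injective hxy _)]
      exact hfib i
    · obtain ⟨j, hj, rfl⟩ := Finset.mem_image.1 ha
      rw [← (Finset.mem_filter.1 hj).2, hzero]
  have hae := coeff_coeff_sum_monomial_monomial S a e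
  rwa [show ∑ d ∈ S, _ = (0 : F[X][X]) from hf, if_pos he, coeff_zero, coeff_zero, eq_comm] at hae

theorem finrank_monomialCode (hxy : Function.Injective fun i => (x i, y i))
    (hfib : ∀ i, l ≤ (Finset.univ.filter (y · = y i)).card)
    (hS : ∀ e ∈ S, e.1 < l ∧ e.2 < (Finset.univ.image y).card) :
    Module.finrank F (monomialCode x y S) = S.card := by
  have hindep := linearIndepOn_pow_mul_pow hxy hfib hS
  rw [monomialCode, Set.image_eq_range]
  exact (finrank_span_eq_card hindep).trans (Fintype.card_coe S)

theorem le_card_filter_ne_zero_of_mem_monomialCode {r δ : ℕ}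
    (hxy : Function.Injective fun i => (x i, y i)) (hS : ∀ e ∈ S, e.1 < r)
    (hc : c ∈ monomialCode x y S) {b : F}
    (hb : r + δ ≤ (Finset.univ.filter (y · = b)).card + 1) (hne : ∃ j, y j = b ∧ c j ≠ 0) :
    δ ≤ ((Finset.univ.filter (y · = b)).filter (c · ≠ 0)).card := by
  obtain ⟨G, hG, hcG⟩ := exists_eval_eq_of_mem_monomialCode hS hc b
  obtain ⟨j, hjb, hcj⟩ := hne
  have hzeros : ((Finset.univ.filter (y · = b)).filter (c · = 0)).card < r := by
    by_contra! hcard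
    have hG0 : G = 0 := by
      refine eq_zero_of_degree_lt_of_eval_index_eq_zero (v := x) _
        ((injOn_fiber_of_injective hxy b).mono (Finset.filter_subset (c · = 0) _))
        ((mem_degreeLT.1 hG).trans_le (Nat.cast_le.2 hcard)) fun i hi => ?_
      obtain ⟨hib, hci⟩ := Finset.mem_filter.1 hi
      rw [← hcG i (Finset.mem_filter.1 hib).2, hci]
    exact hcj (by rw [hcG j hjb, hG0, eval_zero])
  have hsum := Finset.card_filter_add_card_filter_not (s := Finset.univ.filter (y · = b)) (c · = 0)
  simp only [ne_eq]
  omega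

theorem card_le_hammingNorm_add_of_mem_monomialCode {L : F[X]} {D : ℕ}
    (hxy : Function.Injective fun i => (x i, y i)) (hL : ∀ i, y i ^ 2 = L.eval (x i))
    (hodd : Odd L.natDegree) (hS : ∀ e ∈ S, 2 * e.1 + L.natDegree * e.2 ≤ D)
    (hc : c ∈ monomialCode x y S) (hc0 : c ≠ 0) : Fintype.card ι ≤ hammingNorm c + D := by
  obtain ⟨A, B, hA, hB, hcAB⟩ := exists_eval_add_mul_eval_eq_of_mem_monomialCode hL hS hc
  have hN : A ^ 2 - L * B ^ 2 ≠ 0 := by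
    refine sq_sub_mul_sq_ne_zero_of_odd_natDegree hodd ?_
    rintro ⟨rfl, rfl⟩
    exact hc0 (funext fun i => by simp [hcAB])
  have hzeros : (Finset.univ.filter (c · = 0)).card ≤ D := by
    rw [← Finset.card_image_of_injective _ hxy]
    refine (card_le_natDegree_sq_sub_mul_sq hN fun z hz => ?_).trans
      (natDegree_sq_sub_mul_sq_le hA hB)
    obtain ⟨i, hi, rfl⟩ := Finset.mem_image.1 hz
    exact ⟨hL i, by rw [← hcAB, (Finset.mem_filter.1 hi).2]⟩
  have hsum := Finset.card_filter_add_card_filter_not (s := (Finset.univ : Finset ι)) (c · = 0)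
  rw [Finset.card_univ] at hsum
  simp only [hammingNorm, ne_eq]
  omega

theorem exists_hammingNorm_add_eq_of_mem_monomialCode {t : ℕ}
    (hfib : ∀ i, (Finset.univ.filter (y · = y i)).card = l)
    (hS : ∀ j ≤ t, (0, j) ∈ S) (ht : t ≤ (Finset.univ.image y).card) :
    ∃ c ∈ monomialCode x y S, hammingNorm c + t * l = Fintype.card ι := by
  obtain ⟨T, hTy, hT⟩ := Finset.exists_subset_card_eq ht
  let P : F[X] := ∏ b ∈ T, (X - C b)
  have hP : P.natDegree = t := by rw [natDegree_finsetProd_X_sub_C_eq_card, hT]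
  have hzero (i : ι) : P.eval (y i) = 0 ↔ y i ∈ T := by
    simp only [P, eval_prod, Finset.prod_eq_zero_iff, eval_sub, eval_X, eval_C, sub_eq_zero]
    exact exists_eq_right'
  refine ⟨fun i => P.eval (y i), ?_, ?_⟩
  · have hsum : (fun i => P.eval (y i)) =
        ∑ j ∈ Finset.range (t + 1), P.coeff j • (x ^ 0 * y ^ j) := by
      funext i
      simp [eval_eq_sum_range, hP]
    rw [hsum]
    refine Submodule.sum_mem _ fun j hj => Submodule.smul_mem _ _ (Submodule.subset_span ?_)
    exact ⟨(0, j), hS j (Nat.lt_succ_iff.1 (Finset.mem_range.1 hj)), rfl⟩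
  · have hcard : (Finset.univ.filter (y · ∈ T)).card = t * l := by
      rw [Finset.card_eq_sum_card_fiberwise (f := y) (t := T) fun i hi => (by simpa using hi),
        ← hT]
      refine Finset.sum_const_nat fun b hb => ?_
      obtain ⟨i, -, rfl⟩ := Finset.mem_image.1 (hTy hb)
      rw [← hfib i, Finset.filter_filter]
      congr 1
      ext j
      simp only [Finset.mem_filter_univ, and_iff_right_iff_imp]
      rintro h
      rwa [h]
    have hsplit := Finset.card_filter_add_card_filter_not (s := (Finset.univ : Finset ι)) (y · ∈ T)
    simp only [hammingNorm, ne_eq, hzero]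
    rw [← hcard, add_comm, hsplit, Finset.card_univ]

end Parameters

end MonomialCode

section LocallyRepairable

theorem exists_fin_enumeration {α β : Type*} [DecidableEq β] {m l : ℕ} {T : Finset β}
    (hT : T.card = m) {A : β → Finset α} (hA : ∀ b ∈ T, (A b).card = l) :
    ∃ (x : Fin (m * l) → α) (y : Fin (m * l) → β), (Function.Injective fun i => (x i, y i)) ∧
      (∀ i, y i ∈ T ∧ x i ∈ A (y i)) ∧ ∀ b ∈ T, (Finset.univ.filter (y · = b)).card = l := by
  classical
  have hcard : (T.sigma A).card = m * l := by
    rw [Finset.card_sigma, Finset.sum_const_nat hA, hT]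
  let e : Fin (m * l) ≃ T.sigma A := (Finset.equivFinOfCardEq hcard).symm
  have hinj : Function.Injective fun i => ((e i).1.2, (e i).1.1) := fun i j hij => by
    obtain ⟨hsnd, hfst⟩ := Prod.ext_iff.1 hij
    exact e.injective (Subtype.ext (Sigma.ext hfst (heq_of_eq hsnd)))
  refine ⟨fun i => (e i).1.2, fun i => (e i).1.1, hinj, fun i => Finset.mem_sigma.1 (e i).2,
    fun b hb => ?_⟩
  rw [← Finset.card_image_of_injOn (injOn_fiber_of_injective hinj b)]
  refine (congrArg _ ?_).trans (hA b hb)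
  ext a
  simp only [Finset.mem_image, Finset.mem_filter_univ]
  constructor
  · rintro ⟨i, rfl, rfl⟩
    exact (Finset.mem_sigma.1 (e i).2).2
  · exact fun ha => ⟨e.symm ⟨⟨b, a⟩, Finset.mem_sigma.2 ⟨hb, ha⟩⟩, by simp⟩

theorem isLRC_monomialCode {F : Type*} [Field F] [DecidableEq F] {n r δ : ℕ} {x y : Fin n → F}
    {S : Finset (ℕ × ℕ)} (hxy : Function.Injective fun i => (x i, y i)) (hS : ∀ e ∈ S, e.1 < r)
    (hfib : ∀ i, (Finset.univ.filter (y · = y i)).card + 1 = r + δ) :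
    IsLRC (monomialCode x y S) r δ := by
  refine fun i => ⟨Finset.univ.filter (y · = y i), by simp, (Nat.eq_sub_of_add_eq (hfib i)).le,
    fun c hc hne => ?_⟩
  simp only [Finset.mem_filter_univ] at hne
  exact le_card_filter_ne_zero_of_mem_monomialCode hxy hS hc (hfib i).ge hne

/-- The exponents `(a, b)` of the monomials `x ^ a * y ^ b` spanning the repairable codes: those
with `a < r` and `b < t`, and `y ^ t`, which yields a word with exactly `t` lines of zeros. -/
def lrcExponents (r t : ℕ) : Finset (ℕ × ℕ) :=
  insert (0, t) (Finset.range r ×ˢ Finset.range t)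

section Exponents

variable {r δ l t : ℕ} {e : ℕ × ℕ}

theorem card_lrcExponents : (lrcExponents r t).card = t * r + 1 := by
  rw [lrcExponents, Finset.card_insert_of_notMem (by simp), Finset.card_product, Finset.card_range,
    Finset.card_range, mul_comm]

theorem zero_mem_lrcExponents (hr : 0 < r) {j : ℕ} (hj : j ≤ t) : (0, j) ∈ lrcExponents r t := by
  simp only [lrcExponents, Finset.mem_insert, Prod.mk.injEq, true_and, Finset.mem_product,
    Finset.mem_range]
  omega

theorem lt_and_le_of_mem_lrcExponents (hr : 0 < r) (he : e ∈ lrcExponents r t) :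
    e.1 < r ∧ e.2 ≤ t := by
  simp only [lrcExponents, Finset.mem_insert, Prod.ext_iff, Finset.mem_product,
    Finset.mem_range] at he
  omega

-- The maximum is attained at `(0, t)` or at `(r - 1, t - 1)`, where it is `t * l + r - δ - 1`; the
-- truncated subtraction takes the larger of the two.
theorem two_mul_add_mul_le_of_mem_lrcExponents (hrδ : r + δ = l + 1) (he : e ∈ lrcExponents r t) :
    2 * e.1 + l * e.2 ≤ t * l + (r - (δ + 1)) := by
  simp only [lrcExponents, Finset.mem_insert, Prod.ext_iff, Finset.mem_product,
    Finset.mem_range] at he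
  rcases he with ⟨h₁, h₂⟩ | ⟨h₁, h₂⟩
  · rw [h₁, h₂, mul_comm l t]
    omega
  · have := Nat.mul_le_mul_left l (Nat.succ_le_of_lt h₂)
    rw [Nat.mul_succ, mul_comm l t] at this
    omega

end Exponents

theorem exists_isLRC_of_odd_natDegree {F : Type*} [Field F] [DecidableEq F] {L : F[X]} {l : ℕ}
    (hL : L.natDegree = l) (hl : Odd l) {r δ t m : ℕ} (hr : 0 < r) (hδ : 0 < δ)
    (hrδ : r + δ = l + 1) (htm : t < m) {T : Finset F} (hT : T.card = m)
    (hline : ∀ b ∈ T, ∃ A : Finset F, A.card = l ∧ ∀ a ∈ A, L.eval a = b ^ 2) :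
    ∃ C : Submodule F (Fin (m * l) → F), Module.finrank F C = t * r + 1 ∧ IsLRC C r δ ∧
      MinDistGe C ((m - t) * l - (r - (δ + 1))) ∧
      ∃ c ∈ C, c ≠ 0 ∧ hammingWt c = (m - t) * l := by
  subst hL
  choose! A hA hAL using hline
  obtain ⟨x, y, hxy, hmem, hfib⟩ := exists_fin_enumeration hT hA
  have hfib' (i) := hfib (y i) (hmem i).1
  have himage : Finset.univ.image y = T := by
    refine Finset.Subset.antisymm (Finset.image_subset_iff.2 fun i _ => (hmem i).1) fun b hb => ?_
    obtain ⟨i, hi⟩ := Finset.card_pos.1 ((hfib b hb).symm ▸ hl.pos)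
    exact Finset.mem_image.2 ⟨i, Finset.mem_univ i, (Finset.mem_filter_univ i).1 hi⟩
  have hexp {e} (he : e ∈ lrcExponents r t) := lt_and_le_of_mem_lrcExponents hr he
  refine ⟨monomialCode x y (lrcExponents r t), ?_, ?_, fun c hc hc0 => ?_, ?_⟩
  · rw [finrank_monomialCode hxy (fun i => (hfib' i).ge) fun e he => ?_, card_lrcExponents]
    have := hexp he
    rw [himage]
    omega
  · exact isLRC_monomialCode hxy (fun e he => (hexp he).1) fun i => by rw [hfib', hrδ]
  · have hwt := card_le_hammingNorm_add_of_mem_monomialCode hxy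
      (fun i => (hAL _ (hmem i).1 _ (hmem i).2).symm) hl
      (fun e he => two_mul_add_mul_le_of_mem_lrcExponents hrδ he) hc hc0
    rw [Fintype.card_fin] at hwt
    change _ ≤ hammingNorm c
    rw [Nat.sub_mul]
    omega
  · obtain ⟨c, hc, hwt⟩ := exists_hammingNorm_add_eq_of_mem_monomialCode (x := x) (t := t) hfib'
      (fun j hj => zero_mem_lrcExponents hr hj) (himage.symm ▸ hT.symm ▸ htm.le)
    rw [Fintype.card_fin] at hwt
    have hlt := Nat.mul_lt_mul_of_pos_right htm hl.pos
    refine ⟨c, hc, hammingNorm_pos_iff.1 (by omega), ?_⟩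
    change hammingNorm c = _
    rw [Nat.sub_mul]
    omega

theorem singletonOptimal_of_add_eq {r δ l t m : ℕ} (hr : 0 < r) (hrδ : r + δ = l + 1)
    (htm : t ≤ m) : SingletonOptimal (m * l) (t * r + 1) ((m - t) * l) r δ := by
  have hceil : (t * r + 1 + r - 1) / r = t + 1 := by
    rw [show t * r + 1 + r - 1 = (t + 1) * r by rw [add_mul]; omega, Nat.mul_div_cancel _ hr]
  have hl : (l : ℤ) = r + δ - 1 := by omega
  rw [SingletonOptimal, hceil]
  push_cast [htm]
  rw [hl]
  ring

theorem exists_isLRC_of_natCard_eq {F : Type*} [Field F] [Finite F] [DecidableEq F] {p k s : ℕ}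
    [Fact p.Prime] [CharP F p] (hp : p ≠ 2) (hk : k ≠ 0) (hs : s ≠ 0)
    (hF : Nat.card F = (p ^ k) ^ (2 * s)) {r δ t m : ℕ} (hr : 0 < r) (hδ : 0 < δ)
    (hrδ : r + δ = p ^ k + 1) (htm : t < m)
    (hm : m ≤ (p ^ k) ^ s + ((p ^ k) ^ s - 1) * (p ^ k) ^ (s - 1)) :
    ∃ C : Submodule F (Fin (m * p ^ k) → F), Module.finrank F C = t * r + 1 ∧ IsLRC C r δ ∧
      MinDistGe C ((m - t) * p ^ k - (r - (δ + 1))) ∧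
      ∃ c ∈ C, c ≠ 0 ∧ hammingWt c = (m - t) * p ^ k := by
  have := Fintype.ofFinite F
  have hprime : p.Prime := Fact.out
  obtain ⟨c, hc, hcount⟩ := exists_le_ncard_setOf_mul_sq_mem_range hp hF hs
  obtain ⟨T, hTsub, hT⟩ := Set.exists_subset_card_eq (hm.trans hcount)
  have hL : (C c⁻¹ * (X ^ p ^ k - X) : F[X]).natDegree = p ^ k := by
    rw [natDegree_C_mul (inv_ne_zero hc),
      FiniteField.X_pow_card_sub_X_natDegree_eq F (Nat.one_lt_pow hk hprime.one_lt)]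
  refine exists_isLRC_of_odd_natDegree hL ((hprime.odd_of_ne_two hp).pow) hr hδ hrδ htm
    (T := T.toFinite.toFinset) (by rw [← Set.ncard_eq_toFinset_card, hT]) fun b hb => ?_
  refine ⟨Finset.univ.filter fun x => artinSchreierMap F p k x = c * b ^ 2,
    card_artinSchreierMap_fiber hF (hTsub ((Set.Finite.mem_toFinset _).1 hb)), fun a ha => ?_⟩
  simp only [eval_mul, eval_C, eval_sub, eval_pow, eval_X]
  rw [← artinSchreierMap_apply, (Finset.mem_filter.1 ha).2, inv_mul_cancel_left₀ hc]

theorem add_mul_pow_div_eq {l s : ℕ} (hl : 0 < l) (hs : s ≠ 0) :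
    (l ^ (2 * s) + (l - 1) * l ^ s) / l = l ^ s + (l ^ s - 1) * l ^ (s - 1) := by
  obtain ⟨n, rfl⟩ := Nat.exists_eq_succ_of_ne_zero hs
  refine Nat.div_eq_of_eq_mul_right hl ?_
  have hpow : 1 ≤ l ^ n.succ := Nat.one_le_pow _ _ hl
  zify [hpow, hl]
  simp only [Nat.succ_eq_add_one, Nat.add_sub_cancel]
  ring

theorem stmt_9_general (g : ℕ) (hpp : IsPrimePow (2 * g + 1)) (s : ℕ)
    (g' : ℤ) (hg'1 : -(g : ℤ) ≤ g') (hg'2 : g' ≤ g)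
    (r δ : ℕ) (hr : (r : ℤ) = (g : ℤ) + 1 - g') (hδ : (δ : ℤ) = (g : ℤ) + 1 + g')
    (t m : ℕ) (htm : t < m)
    (hm : m ≤ ((2 * g + 1) ^ (2 * s) + 2 * g * (2 * g + 1) ^ s) / (2 * g + 1))
    (F : Type*) [Field F] [Fintype F] [DecidableEq F]
    (hF : Fintype.card F = (2 * g + 1) ^ (2 * s)) :
    (∃ C : Submodule F (Fin (m * (2 * g + 1)) → F),
      Module.finrank F C = t * r + 1 ∧ IsLRC C r δ ∧
      ∀ c ∈ C, c ≠ 0 →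
        ((m - t : ℕ) : ℤ) * (2 * (g : ℤ) + 1) + min 0 (2 * g' + 1) ≤ (hammingWt c : ℤ)) ∧
    (0 ≤ g' →
      ExistsOptimalLRC F (m * (2 * g + 1)) (t * r + 1) ((m - t) * (2 * g + 1)) r δ) := by
  have hs : s ≠ 0 := by
    rintro rfl
    exact Fintype.one_lt_card.ne' (by simpa using hF)
  obtain ⟨p, k, hp, hk, hpk⟩ := (isPrimePow_nat_iff _).1 hpp
  have : Fact p.Prime := ⟨hp⟩
  have hF' : Nat.card F = (p ^ k) ^ (2 * s) := by rw [Nat.card_eq_fintype_card, hF, hpk]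
  have : CharP F p := charP_of_card_eq_prime_pow (by rw [hF, ← hpk, ← pow_mul])
  have hp2 : p ≠ 2 := by
    rintro rfl
    exact Nat.not_even_iff_odd.2 ⟨g, hpk⟩ (even_two.pow_of_ne_zero hk.ne')
  have hm' : m ≤ (p ^ k) ^ s + ((p ^ k) ^ s - 1) * (p ^ k) ^ (s - 1) := by
    rw [hpk]
    exact hm.trans_eq (add_mul_pow_div_eq (Nat.succ_pos (2 * g)) hs)
  have hcode := exists_isLRC_of_natCard_eq hp2 hk.ne' hs hF' (r := r) (δ := δ) (by omega)
    (by omega) (by omega) htm hm'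
  rw [hpk] at hcode
  obtain ⟨C, hrank, hC, hge, w, hw, hw0, hwt⟩ := hcode
  refine ⟨⟨C, hrank, hC, fun c hc hc0 => ?_⟩, fun hg' => ⟨C, hrank, ⟨?_, w, hw, hw0, hwt⟩, hC, ?_⟩⟩
  · have := hge c hc hc0
    have hcast : ((m - t : ℕ) : ℤ) * (2 * g + 1) = ((m - t) * (2 * g + 1) : ℕ) := by push_cast; rfl
    omega
  · rwa [Nat.sub_eq_zero_of_le (by omega : r ≤ δ + 1), Nat.sub_zero] at hge
  · exact singletonOptimal_of_add_eq (by omega) (by omega) htm.le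

end LocallyRepairable

/-- For `g ≥ 2` with `2g+1` a prime power, `q = (2g+1)^(2s)`, an
integer `g'` with `-(g-1) ≤ g' ≤ g-1`, `r = g+1-g'`, `δ = g+1+g'`, and all
`1 ≤ t < m ≤ ⌊(q + 2g(2g+1)^s)/(2g+1)⌋`, there exists an `(r, δ)`-LRC over `F_q`
of length `m(2g+1)`, dimension `tr+1`, and minimum distance at least
`(m-t)(2g+1) + min{0, 2g'+1}`; and if moreover `0 ≤ g'`, there exists an optimal
`(r, δ)`-LRC with parameters `[m(2g+1), tr+1, (m-t)(2g+1)]_q`. -/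
theorem stmt_9 (g : ℕ) (hg : 2 ≤ g) (hpp : IsPrimePow (2 * g + 1))
    (s : ℕ) (hs : 0 < s) (q : ℕ) (hq : q = (2 * g + 1) ^ (2 * s))
    (g' : ℤ) (hg'1 : -((g : ℤ) - 1) ≤ g') (hg'2 : g' ≤ (g : ℤ) - 1)
    (r δ : ℕ) (hr : (r : ℤ) = (g : ℤ) + 1 - g') (hδ : (δ : ℤ) = (g : ℤ) + 1 + g')
    (t m : ℕ) (ht : 1 ≤ t) (htm : t < m)
    (hm : m ≤ (q + 2 * g * (2 * g + 1) ^ s) / (2 * g + 1))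
    (F : Type*) [Field F] [Fintype F] [DecidableEq F] (hF : Fintype.card F = q) :
    (∃ C : Submodule F (Fin (m * (2 * g + 1)) → F),
      Module.finrank F C = t * r + 1 ∧ IsLRC C r δ ∧
      ∀ c ∈ C, c ≠ 0 →
        ((m - t : ℕ) : ℤ) * (2 * (g : ℤ) + 1) + min 0 (2 * g' + 1) ≤ (hammingWt c : ℤ)) ∧
    (0 ≤ g' →
      ExistsOptimalLRC F (m * (2 * g + 1)) (t * r + 1) ((m - t) * (2 * g + 1)) r δ) := by
  subst hq
  exact stmt_9_general g hpp s g' (by omega) (by omega) r δ hr hδ t m htm hm F hF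
end
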